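/- arXiv:1409.3159 — 3 statements merged into one kernel-verified Lean document; each statement's English description precedes it below -/
import Mathlib

section
/- Let G be a connected graph with σ_{k+1} ≥ t_{k+1} for some positive integer k. Then t_k ≥ t_{k+1} − k + 1. (Corollary 4) -/
open SimpleGraph

variable {V : Type*}

/-- A set of vertices is independent in `G`. -/
def IsIndSet (G : SimpleGraph V) (s : Set V) : Prop :=
  ∀ ⦃u⦄, u ∈ s → ∀ ⦃v⦄, v ∈ s → ¬ G.Adj u v

/-- The number of end-vertices (vertices of degree one) of a subgraph `H`. -/
noncomputable def endVertexCount {G : SimpleGraph V} (H : G.Subgraph) : ℕ :=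
  {v : V | v ∈ H.verts ∧ (H.neighborSet v).ncard = 1}.ncard

/-- `H` is a cycle; a single vertex and a single edge are regarded as
simple cycles of orders 1 and 2, respectively. -/
def IsCycleSubgraph {G : SimpleGraph V} (H : G.Subgraph) : Prop :=
  H.Connected ∧ (H.verts.ncard ≤ 2 ∨ ∀ v ∈ H.verts, (H.neighborSet v).ncard = 2)

/-- `H` is a `k`-ended tree in `G`: a tree with at most `k` end-vertices (leaves);
a cycle is regarded as a 1-ended tree. -/
def IsKEndedTree (G : SimpleGraph V) (k : ℕ) (H : G.Subgraph) : Prop :=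
  (H.coe.IsTree ∧ endVertexCount H ≤ k) ∨ (1 ≤ k ∧ IsCycleSubgraph H)

/-- `t k`: the order of a largest `k`-ended tree in `G`. -/
noncomputable def maxKEndedOrder (G : SimpleGraph V) (k : ℕ) : ℕ :=
  sSup {n | ∃ H : G.Subgraph, IsKEndedTree G k H ∧ H.verts.ncard = n}

/-- `σ m`: the minimum degree sum over independent sets of `m` vertices of `G`,
and `+∞` if the independence number of `G` is less than `m`. -/
noncomputable def minDegreeSum (G : SimpleGraph V) [Fintype V] [DecidableRel G.Adj]
    (m : ℕ) : ℕ∞ :=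
  ⨅ s ∈ {s : Finset V | s.card = m ∧ IsIndSet G ↑s}, (∑ v ∈ s, G.degree v : ℕ∞)

namespace KEnded

variable {X : Type*}

/-- The degree of a vertex, as the cardinality of its neighbour set. -/
noncomputable def deg (F : SimpleGraph X) (v : X) : ℕ :=
  (F.neighborSet v).ncard

/-- The total excess of the degrees over two on a finite set of vertices. -/
noncomputable def excess (F : SimpleGraph X) (S : Finset X) : ℕ :=
  ∑ v ∈ S, (deg F v - 2)

lemma deg_mono [Finite X] {F F' : SimpleGraph X} (h : F ≤ F') (v : X) : deg F v ≤ deg F' v :=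
  Set.ncard_le_ncard (fun _ hw => h hw) (Set.toFinite _)

lemma deg_eq_degree (F : SimpleGraph X) (v : X) [Fintype (F.neighborSet v)] :
    deg F v = F.degree v := by
  rw [deg, Set.ncard_eq_toFinset_card', ← SimpleGraph.card_neighborFinset_eq_degree]
  rfl

lemma excess_mono [Finite X] {F F' : SimpleGraph X} (h : F ≤ F') (S : Finset X) :
    excess F S ≤ excess F' S :=
  Finset.sum_le_sum fun v _ => Nat.sub_le_sub_right (deg_mono h v) 2

/-- In a nontrivial tree, the number of leaves is two more than the total excess. -/
lemma card_leaves_eq [Fintype X] [Nontrivial X] {T : SimpleGraph X} (hT : T.IsTree) :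
    {v | deg T v = 1}.ncard = excess T Finset.univ + 2 := by
  classical
  have hpos : ∀ v, 1 ≤ deg T v := by
    intro v
    rw [deg_eq_degree]
    exact hT.connected.preconnected.degree_pos_of_nontrivial v
  have hsum : ∑ v, deg T v + 2 = 2 * Fintype.card X := by
    have h1 := T.sum_degrees_eq_twice_card_edges
    have h2 := hT.card_edgeFinset
    simp only [deg_eq_degree]
    omega
  have hcard : {v | deg T v = 1}.ncard = ∑ v, if deg T v = 1 then 1 else 0 := by
    rw [Set.ncard_eq_toFinset_card', Finset.sum_boole]
    simp
  have key : ∑ v, ((deg T v - 2) + 2) = ∑ v, (deg T v + if deg T v = 1 then 1 else 0) := by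
    refine Finset.sum_congr rfl fun v _ => ?_
    have := hpos v
    split_ifs <;> omega
  rw [Finset.sum_add_distrib, Finset.sum_add_distrib, ← hcard] at key
  simp only [Finset.sum_const, Finset.card_univ, smul_eq_mul] at key
  unfold excess
  omega

variable {G : SimpleGraph V}

lemma bddAbove_orders [Finite V] (G : SimpleGraph V) (k : ℕ) :
    BddAbove {n | ∃ H : G.Subgraph, IsKEndedTree G k H ∧ H.verts.ncard = n} := by
  refine ⟨Nat.card V, ?_⟩
  rintro n ⟨H, -, rfl⟩
  rw [← Set.ncard_univ]
  exact Set.ncard_le_ncard (Set.subset_univ _) (Set.toFinite _)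

lemma ncard_le_maxKEndedOrder [Finite V] {k : ℕ} {H : G.Subgraph} (hH : IsKEndedTree G k H) :
    H.verts.ncard ≤ maxKEndedOrder G k :=
  le_csSup (bddAbove_orders G k) ⟨H, hH, rfl⟩

lemma ncard_verts_toSubgraph [Fintype X] {F : SimpleGraph X} (f : Copy F G) :
    f.toSubgraph.verts.ncard = Fintype.card X := by
  have : f.toSubgraph.verts = f '' Set.univ := rfl
  rw [this, Set.ncard_image_of_injective _ (show Function.Injective f from f.injective),
    Set.ncard_univ, Nat.card_eq_fintype_card]

lemma ncard_neighborSet_toSubgraph {F : SimpleGraph X} (f : Copy F G) (x : X) :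
    (f.toSubgraph.neighborSet (f x)).ncard = deg F x := by
  have : f.toSubgraph.neighborSet (f x) = f '' F.neighborSet x := by
    ext w
    simp only [SimpleGraph.Subgraph.mem_neighborSet, SimpleGraph.Copy.toSubgraph,
      SimpleGraph.Subgraph.map_adj, Relation.Map, SimpleGraph.Subgraph.top_adj, Set.mem_image,
      SimpleGraph.mem_neighborSet]
    constructor
    · rintro ⟨a, b, hab, ha, rfl⟩
      obtain rfl : a = x := f.injective ha
      exact ⟨b, hab, rfl⟩
    · rintro ⟨b, hb, rfl⟩
      exact ⟨x, b, hb, rfl, rfl⟩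
  rw [this, Set.ncard_image_of_injective _ (show Function.Injective f from f.injective), deg]

lemma card_le_of_isTree [Fintype X] [Finite V] {F : SimpleGraph X} (f : Copy F G) (hF : F.IsTree)
    {k : ℕ} (hk : {v | deg F v = 1}.ncard ≤ k) : Fintype.card X ≤ maxKEndedOrder G k := by
  rw [← ncard_verts_toSubgraph f]
  refine ncard_le_maxKEndedOrder (Or.inl ⟨f.isoToSubgraph.isTree_iff.1 hF, ?_⟩)
  refine le_trans (le_of_eq ?_) hk
  rw [endVertexCount, ← Set.ncard_image_of_injective _ f.injective]
  congr 1
  ext v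
  constructor
  · rintro ⟨⟨x, -, rfl⟩, hx⟩
    exact ⟨x, (ncard_neighborSet_toSubgraph f x).symm.trans hx, rfl⟩
  · rintro ⟨x, hx, rfl⟩
    exact ⟨⟨x, trivial, rfl⟩, (ncard_neighborSet_toSubgraph f x).trans hx⟩

/-- A connected graph with small excess has a spanning tree with few leaves. -/
lemma card_le_of_connected [Fintype X] [Finite V] {F : SimpleGraph X} (f : Copy F G)
    (hF : F.Connected) {k : ℕ} (hk : excess F Finset.univ + 2 ≤ k) :
    Fintype.card X ≤ maxKEndedOrder G k := by
  obtain ⟨T, hTF, hT⟩ := hF.exists_isTree_le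
  refine card_le_of_isTree (f.comp (SimpleGraph.Copy.ofLE T F hTF)) hT ?_
  rcases subsingleton_or_nontrivial X with hX | hX
  · have : {v | deg T v = 1} = ∅ := by
      ext v
      simp only [Set.mem_ofPred_eq, Set.mem_empty_iff_false, iff_false]
      intro h
      obtain ⟨w, hw⟩ := Set.ncard_eq_one.1 h
      have : w ∈ T.neighborSet v := by rw [hw]; rfl
      exact T.ne_of_adj this (Subsingleton.elim _ _)
    simp [this]
  · rw [card_leaves_eq hT]
    have := excess_mono hTF Finset.univ
    omega

/-- A connected graph containing a cycle either is a cycle, or loses excess when a suitable edge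
of the cycle is deleted. -/
lemma card_le_of_not_isAcyclic [Fintype X] [Finite V] {F : SimpleGraph X} (f : Copy F G)
    (hF : F.Connected) (hcyc : ¬ F.IsAcyclic) {k : ℕ} (hk : excess F Finset.univ + 1 ≤ k) :
    Fintype.card X ≤ maxKEndedOrder G k := by
  classical
  simp only [SimpleGraph.IsAcyclic, not_forall, not_not] at hcyc
  obtain ⟨a, p, hp⟩ := hcyc
  have hsub : ∀ v, p.toSubgraph.neighborSet v ⊆ F.neighborSet v :=
    fun v => p.toSubgraph.neighborSet_subset v
  by_cases hall : ∀ v ∈ p.support, deg F v = 2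
  · have hclosed : ∀ v ∈ p.support, ∀ w, F.Adj v w → w ∈ p.support := by
      intro v hv w hvw
      have heq : p.toSubgraph.neighborSet v = F.neighborSet v := by
        refine Set.eq_of_subset_of_ncard_le (hsub v) ?_ (Set.toFinite _)
        rw [hp.ncard_neighborSet_toSubgraph_eq_two hv]
        exact (hall v hv).le
      have hw : w ∈ p.toSubgraph.neighborSet v := by rw [heq]; exact hvw
      exact p.mem_verts_toSubgraph.1 (p.toSubgraph.edge_vert (p.toSubgraph.adj_symm hw))
    have hmem : ∀ v, v ∈ p.support := by
      intro v
      obtain ⟨q⟩ := hF.preconnected v a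
      induction q with
      | nil => exact p.start_mem_support
      | cons h _ ih => exact hclosed _ (ih p hp hsub hall hclosed) _ h.symm
    rw [← ncard_verts_toSubgraph f]
    refine ncard_le_maxKEndedOrder (Or.inr ⟨by omega, ?_, Or.inr ?_⟩)
    · exact ⟨f.isoToSubgraph.connected_iff.1 hF⟩
    · rintro _ ⟨x, -, rfl⟩
      exact (ncard_neighborSet_toSubgraph f x).trans (hall x (hmem x))
  · push Not at hall
    obtain ⟨b, hb, hb2⟩ := hall
    have hpb := hp.ncard_neighborSet_toSubgraph_eq_two hb
    have hb3 : 3 ≤ deg F b := by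
      have : 2 ≤ deg F b := hpb ▸ Set.ncard_le_ncard (hsub b) (Set.toFinite _)
      omega
    obtain ⟨w, hw⟩ : (p.toSubgraph.neighborSet b).Nonempty := by
      rw [← Set.ncard_pos (Set.toFinite _)]
      omega
    have hedge : s(b, w) ∈ p.edges := by
      rw [← SimpleGraph.Walk.mem_edges_toSubgraph]
      exact hw
    have hnb : ¬ F.IsBridge s(b, w) := fun h => h.notMem_edges_of_isCycle hp hedge
    have hle : F.deleteEdges {s(b, w)} ≤ F := F.deleteEdges_le _
    have hlt : deg (F.deleteEdges {s(b, w)}) b < deg F b := by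
      refine Set.ncard_lt_ncard (Set.ssubset_iff_of_subset (fun _ h => hle h) |>.2 ?_)
        (Set.toFinite _)
      exact ⟨w, hsub b hw, fun h => (SimpleGraph.deleteEdges_adj.1 h).2 rfl⟩
    refine card_le_of_connected (f.comp (SimpleGraph.Copy.ofLE _ F hle))
      (hF.connected_delete_edge_of_not_isBridge hnb) (le_trans ?_ hk)
    have : excess (F.deleteEdges {s(b, w)}) Finset.univ < excess F Finset.univ := by
      refine Finset.sum_lt_sum (fun v _ => Nat.sub_le_sub_right (deg_mono hle v) 2)
        ⟨b, Finset.mem_univ b, by omega⟩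
    omega

/-- `F` is a graph with vertex set `S` that is connected. -/
structure Spans (F : SimpleGraph V) (S : Finset V) : Prop where
  left_mem : ∀ {a b}, F.Adj a b → a ∈ S
  nonempty : S.Nonempty
  reachable : ∀ {a b}, a ∈ S → b ∈ S → F.Reachable a b

lemma Spans.connected_induce {F : SimpleGraph V} {S : Finset V} (h : Spans F S) :
    (F.induce (S : Set V)).Connected := by
  obtain ⟨c, hc⟩ := h.nonempty
  have key : ∀ {a b : V} (_ : F.Walk a b) (ha : a ∈ S) (hb : b ∈ S),
      (F.induce (S : Set V)).Reachable ⟨a, ha⟩ ⟨b, hb⟩ := by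
    intro a b p
    induction p with
    | nil => intro _ _; exact SimpleGraph.Reachable.refl _
    | @cons u v w huv q ih =>
      intro ha hb
      have hv := h.left_mem huv.symm
      exact SimpleGraph.Reachable.trans
        (SimpleGraph.Adj.reachable (show (F.induce (S : Set V)).Adj ⟨u, ha⟩ ⟨v, hv⟩ from huv))
        (ih hv hb)
  have : Nonempty (S : Set V) := ⟨⟨c, hc⟩⟩
  refine ⟨fun a b => ?_⟩
  obtain ⟨p⟩ := h.reachable a.2 b.2
  exact key p a.2 b.2

lemma deg_induce {F : SimpleGraph V} {S : Finset V} (h : ∀ {a b}, F.Adj a b → a ∈ S)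
    (v : (S : Set V)) : deg (F.induce (S : Set V)) v = deg F v := by
  rw [deg, deg, ← Set.ncard_image_of_injective _ Subtype.val_injective]
  congr 1
  ext w
  constructor
  · rintro ⟨x, hx, rfl⟩
    exact hx
  · intro hw
    exact ⟨⟨w, h (F.adj_symm hw)⟩, hw, rfl⟩

lemma excess_induce {F : SimpleGraph V} {S : Finset V} (h : ∀ {a b}, F.Adj a b → a ∈ S) :
    excess (F.induce (S : Set V)) Finset.univ = excess F S := by
  unfold excess
  simp only [deg_induce h]
  exact Finset.sum_coe_sort S fun v => deg F v - 2

/-- The inclusion of an induced subgraph of a subgraph. -/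
noncomputable def copyInduce {F : SimpleGraph V} (hF : F ≤ G) (S : Finset V) :
    Copy (F.induce (S : Set V)) G :=
  (SimpleGraph.Copy.ofLE F G hF).comp (SimpleGraph.Embedding.induce (S : Set V)).toCopy

lemma Spans.card_le [Finite V] {F : SimpleGraph V} {S : Finset V} (h : Spans F S) (hF : F ≤ G)
    {k : ℕ} (hk : excess F S + 2 ≤ k) : S.card ≤ maxKEndedOrder G k := by
  have := card_le_of_connected (copyInduce hF S) h.connected_induce
    (k := k) (by rw [excess_induce h.left_mem]; exact hk)
  simpa using this

lemma Spans.card_le_of_lt [Finite V] {F F' : SimpleGraph V} {S : Finset V} (h : Spans F S)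
    (hF' : F' ≤ G) (hle : F ≤ F') (hmem : ∀ {a b}, F'.Adj a b → a ∈ S) {a b : V}
    (hab : F'.Adj a b) (hnab : ¬ F.Adj a b) {k : ℕ} (hk : excess F' S + 1 ≤ k) :
    S.card ≤ maxKEndedOrder G k := by
  have hle' : F.induce (S : Set V) ≤ F'.induce (S : Set V) := fun _ _ hxy => hle hxy
  have hconn := h.connected_induce.mono hle'
  have := card_le_of_not_isAcyclic (copyInduce hF' S) hconn (fun hac => ?_)
    (k := k) (by rw [excess_induce hmem]; exact hk)
  · simpa using this
  · have hmin := SimpleGraph.isTree_iff_minimal_connected.1 ⟨hconn, hac⟩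
    exact hnab (hmin.2 h.connected_induce hle'
      (show (F'.induce (S : Set V)).Adj ⟨a, hmem hab⟩ ⟨b, hmem hab.symm⟩ from hab))

section Cut

variable {T : SimpleGraph V} {W Γ : Finset V} {x y : V}

lemma deg_sup_edge_le [Finite V] (F : SimpleGraph V) (a b c : V) :
    deg (F ⊔ SimpleGraph.edge a b) c ≤ deg F c + 1 := by
  by_cases h : c = a
  · refine le_trans (Set.ncard_le_ncard (t := insert b (F.neighborSet c)) ?_ (Set.toFinite _))
      (Set.ncard_insert_le _ _)
    intro w hw
    rcases hw with hw | hw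
    · exact Or.inr hw
    · rw [SimpleGraph.edge_adj] at hw
      grind
  · refine le_trans (Set.ncard_le_ncard (t := insert a (F.neighborSet c)) ?_ (Set.toFinite _))
      (Set.ncard_insert_le _ _)
    intro w hw
    rcases hw with hw | hw
    · exact Or.inr hw
    · rw [SimpleGraph.edge_adj] at hw
      grind

lemma deg_sup_edge_of_ne (F : SimpleGraph V) {a b c : V} (ha : c ≠ a) (hb : c ≠ b) :
    deg (F ⊔ SimpleGraph.edge a b) c = deg F c := by
  unfold deg
  congr 1
  ext w
  simp only [SimpleGraph.mem_neighborSet, SimpleGraph.sup_adj, SimpleGraph.edge_adj]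
  grind

/-- The graph obtained from `T` by isolating the vertices of `Γ` and deleting the edge `xy`. -/
def cut (T : SimpleGraph V) (Γ : Finset V) (x y : V) : SimpleGraph V where
  Adj a b := T.Adj a b ∧ a ∉ Γ ∧ b ∉ Γ ∧ s(a, b) ≠ s(x, y)
  symm := ⟨fun a b h => ⟨h.1.symm, h.2.2.1, h.2.1, by rw [Sym2.eq_swap]; exact h.2.2.2⟩⟩
  loopless := ⟨fun a h => T.loopless.irrefl a h.1⟩

lemma cut_comm (T : SimpleGraph V) (Γ : Finset V) (x y : V) : cut T Γ x y = cut T Γ y x := by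
  ext a b
  simp only [cut, Sym2.eq_swap (a := x)]

lemma cut_le (T : SimpleGraph V) (Γ : Finset V) (x y : V) : cut T Γ x y ≤ T := fun _ _ h => h.1

/-- The vertices of `Γ` separate `x` from `y` in the tree `T` on `W`, or `Γ` is empty and `xy` is
an edge; the cut graph has at most the two components of `x` and of `y`. -/
structure Gap (T : SimpleGraph V) (W Γ : Finset V) (x y : V) : Prop where
  adj_mem : ∀ {a b}, T.Adj a b → a ∈ W
  left_mem : x ∈ W
  right_mem : y ∈ W
  left_notMem : x ∉ Γ
  right_notMem : y ∉ Γ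
  ne : x ≠ y
  left_adj : ∃ a, T.Adj x a ∧ (a ∈ Γ ∨ a = y)
  right_adj : ∃ a, T.Adj y a ∧ (a ∈ Γ ∨ a = x)
  reachable : ∀ s ∈ W, s ∉ Γ → (cut T Γ x y).Reachable s x ∨ (cut T Γ x y).Reachable s y

lemma Gap.symm (h : Gap T W Γ x y) : Gap T W Γ y x where
  adj_mem := h.adj_mem
  left_mem := h.right_mem
  right_mem := h.left_mem
  left_notMem := h.right_notMem
  right_notMem := h.left_notMem
  ne := h.ne.symm
  left_adj := h.right_adj
  right_adj := h.left_adj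
  reachable s hs hs' := by rw [cut_comm]; exact (h.reachable s hs hs').symm

lemma Gap.deg_left_lt [Finite V] (h : Gap T W Γ x y) : deg (cut T Γ x y) x < deg T x := by
  obtain ⟨a, ha, haΓ⟩ := h.left_adj
  refine Set.ncard_lt_ncard ((Set.ssubset_iff_of_subset fun _ hw => hw.1).2 ⟨a, ha, ?_⟩)
    (Set.toFinite _)
  rintro ⟨-, -, h1, h2⟩
  rcases haΓ with haΓ | rfl
  · exact h1 haΓ
  · exact h2 rfl

lemma Gap.deg_right_lt [Finite V] (h : Gap T W Γ x y) : deg (cut T Γ x y) y < deg T y := by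
  rw [cut_comm]
  exact h.symm.deg_left_lt

variable [DecidableEq V]

lemma Gap.spans (h : Gap T W Γ x y) {u : V} (hu : u ∈ W) (huΓ : u ∉ Γ) (hxu : x ≠ u)
    (hr : (cut T Γ x y).Reachable u y) :
    Spans (cut T Γ x y ⊔ SimpleGraph.edge x u) (W \ Γ) where
  left_mem := by
    rintro a b (hab | hab)
    · exact Finset.mem_sdiff.2 ⟨h.adj_mem hab.1, hab.2.1⟩
    · rw [SimpleGraph.edge_adj] at hab
      rcases hab.1 with ⟨rfl, -⟩ | ⟨rfl, -⟩
      · exact Finset.mem_sdiff.2 ⟨h.left_mem, h.left_notMem⟩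
      · exact Finset.mem_sdiff.2 ⟨hu, huΓ⟩
  nonempty := ⟨x, Finset.mem_sdiff.2 ⟨h.left_mem, h.left_notMem⟩⟩
  reachable := by
    have hle : cut T Γ x y ≤ cut T Γ x y ⊔ SimpleGraph.edge x u := le_sup_left
    have hxu' : (cut T Γ x y ⊔ SimpleGraph.edge x u).Reachable x u :=
      SimpleGraph.Adj.reachable
        (Or.inr ((SimpleGraph.edge_adj _ _ _ _).2 ⟨Or.inl ⟨rfl, rfl⟩, hxu⟩))
    have key : ∀ s ∈ W \ Γ, (cut T Γ x y ⊔ SimpleGraph.edge x u).Reachable s x := by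
      intro s hs
      rw [Finset.mem_sdiff] at hs
      rcases h.reachable s hs.1 hs.2 with h1 | h1
      · exact h1.mono hle
      · exact ((h1.trans hr.symm).mono hle).trans hxu'.symm
    intro a b ha hb
    exact (key a ha).trans (key b hb).symm

lemma Gap.deg_sup_edge_sub_le [Finite V] (h : Gap T W Γ x y) {u : V} (hu : deg T u = 1) (a : V) :
    deg (cut T Γ x y ⊔ SimpleGraph.edge x u) a - 2 ≤ deg T a - 2 := by
  have h1 := deg_sup_edge_le (cut T Γ x y) x u a
  have h2 := deg_mono (cut_le T Γ x y) a
  by_cases hax : a = x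
  · subst hax
    have := h.deg_left_lt
    omega
  · by_cases hau : a = u
    · subst hau
      omega
    · rw [deg_sup_edge_of_ne _ hax hau]
      omega

/-- Joining `x` across the gap to a leaf saves a leaf if `y` is a branch vertex. -/
lemma Gap.card_le_of_branch [Finite V] (h : Gap T W Γ x y) (hTG : T ≤ G) {u : V}
    (hu : u ∈ W) (huΓ : u ∉ Γ) (hxu : G.Adj x u) (hu1 : deg T u = 1)
    (hr : (cut T Γ x y).Reachable u y) (hy : 3 ≤ deg T y)
    {k : ℕ} (hk : excess T W + 1 ≤ k) : (W \ Γ).card ≤ maxKEndedOrder G k := by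
  refine (h.spans hu huΓ hxu.ne hr).card_le
    (sup_le ((cut_le T Γ x y).trans hTG) ((SimpleGraph.edge_le_iff _).2 (Or.inr hxu)))
    (le_trans (Nat.succ_le_succ ?_) hk)
  refine Nat.lt_of_lt_of_le (Finset.sum_lt_sum (fun a _ => h.deg_sup_edge_sub_le hu1 a)
    ⟨y, Finset.mem_sdiff.2 ⟨h.right_mem, h.right_notMem⟩, ?_⟩)
    (Finset.sum_le_sum_of_subset Finset.sdiff_subset)
  have huy : y ≠ u := by rintro rfl; omega
  have := h.deg_right_lt
  rw [deg_sup_edge_of_ne _ h.ne.symm huy]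
  omega

/-- Joining `x` and `y` to distinct leaves, the first one across the gap, saves a leaf. -/
lemma Gap.card_le [Finite V] (h : Gap T W Γ x y) (hTG : T ≤ G) {u v : V}
    (hu : u ∈ W) (huΓ : u ∉ Γ) (hv : v ∈ W) (hvΓ : v ∉ Γ)
    (hxu : G.Adj x u) (hyv : G.Adj y v) (hu1 : deg T u = 1) (hv1 : deg T v = 1) (huv : u ≠ v)
    (hx1 : deg T x ≠ 1) (hy1 : deg T y ≠ 1)
    (hr : (cut T Γ x y).Reachable u y)
    {k : ℕ} (hk : excess T W + 1 ≤ k) : (W \ Γ).card ≤ maxKEndedOrder G k := by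
  have huy : u ≠ y := by rintro rfl; exact hy1 hu1
  have hvx : v ≠ x := by rintro rfl; exact hx1 hv1
  by_cases hTyv : T.Adj y v
  · by_cases hy3 : 3 ≤ deg T y
    · exact h.card_le_of_branch hTG hu huΓ hxu hu1 hr hy3 hk
    · exfalso
      have hlt := h.deg_right_lt
      have hcutyv : (cut T Γ x y).Adj y v := by
        refine ⟨hTyv, h.right_notMem, hvΓ, ?_⟩
        intro heq
        rcases Sym2.eq_iff.1 heq with ⟨h1, -⟩ | ⟨-, h1⟩
        · exact h.ne h1.symm
        · exact hvx h1
      have hyonly : ∀ w, (cut T Γ x y).Adj y w → w = v := by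
        intro w hw
        have : deg (cut T Γ x y) y ≤ 1 := by omega
        exact (Set.ncard_le_one (Set.toFinite _)).1 this _ hw _ hcutyv
      have hvonly : ∀ w, (cut T Γ x y).Adj v w → w = y := by
        intro w hw
        exact (Set.ncard_le_one (Set.toFinite _)).1 hv1.le _ hw.1 _ hTyv.symm
      have key : ∀ {a b : V} (_ : (cut T Γ x y).Walk a b), b = y ∨ b = v → a = y ∨ a = v := by
        intro a b p
        induction p with
        | nil => exact id
        | cons hab _ ih =>
          intro hb
          rcases ih hb with rfl | rfl
          · exact Or.inr (hyonly _ hab.symm)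
          · exact Or.inl (hvonly _ hab.symm)
      obtain ⟨p⟩ := hr
      rcases key p (Or.inl rfl) with h1 | h1
      · exact huy h1
      · exact huv h1
  · have hspan := h.spans hu huΓ hxu.ne hr
    have hadj : (cut T Γ x y ⊔ SimpleGraph.edge x u ⊔ SimpleGraph.edge y v).Adj y v :=
      Or.inr ((SimpleGraph.edge_adj _ _ _ _).2 ⟨Or.inl ⟨rfl, rfl⟩, hyv.ne⟩)
    refine hspan.card_le_of_lt (F' := cut T Γ x y ⊔ SimpleGraph.edge x u ⊔ SimpleGraph.edge y v)
      ?_ le_sup_left ?_ hadj ?_ (le_trans (Nat.succ_le_succ ?_) hk)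
    · exact sup_le (sup_le ((cut_le T Γ x y).trans hTG)
        ((SimpleGraph.edge_le_iff _).2 (Or.inr hxu))) ((SimpleGraph.edge_le_iff _).2 (Or.inr hyv))
    · rintro a b (hab | hab)
      · exact hspan.left_mem hab
      · rw [SimpleGraph.edge_adj] at hab
        rcases hab.1 with ⟨rfl, -⟩ | ⟨rfl, -⟩
        · exact Finset.mem_sdiff.2 ⟨h.right_mem, h.right_notMem⟩
        · exact Finset.mem_sdiff.2 ⟨hv, hvΓ⟩
    · rintro (hab | hab)
      · exact hTyv hab.1
      · rw [SimpleGraph.edge_adj] at hab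
        rcases hab.1 with ⟨h1, -⟩ | ⟨h1, -⟩
        · exact h.ne h1.symm
        · exact huy h1.symm
    · refine le_trans (Finset.sum_le_sum fun a _ => ?_)
        (Finset.sum_le_sum_of_subset Finset.sdiff_subset)
      have h1 := h.deg_sup_edge_sub_le hu1 a
      have h2 := deg_sup_edge_le (cut T Γ x y ⊔ SimpleGraph.edge x u) y v a
      have h3 := deg_mono (cut_le T Γ x y) a
      by_cases hay : a = y
      · subst hay
        have h4 := h.deg_right_lt
        rw [deg_sup_edge_of_ne _ h.ne.symm huy.symm] at h2
        omega
      · by_cases hav : a = v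
        · subst hav
          rw [deg_sup_edge_of_ne _ hvx huv.symm] at h2
          omega
        · rw [deg_sup_edge_of_ne _ hay hav]
          exact h1

end Cut

section Rooted

/-- `T` is a tree on `W` rooted at `c`, with parent map `par` and depth function `dep`. -/
structure Rooted (T : SimpleGraph V) (W : Finset V) (c : V) (par : V → V) (dep : V → ℕ) :
    Prop where
  root_mem : c ∈ W
  par_root : par c = c
  par_mem : ∀ {v}, v ∈ W → par v ∈ W
  adj_par : ∀ {v}, v ∈ W → v ≠ c → T.Adj v (par v)
  dep_par : ∀ {v}, v ∈ W → v ≠ c → dep v = dep (par v) + 1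
  adj_mem : ∀ {a b}, T.Adj a b → a ∈ W
  par_eq : ∀ {a b}, T.Adj a b → (a ≠ c ∧ par a = b) ∨ (b ≠ c ∧ par b = a)

/-- `v` is a descendant of `y`, or `v = y`. -/
def Below (par : V → V) (v y : V) : Prop := ∃ n, par^[n] v = y

/-- The first `m` proper ancestors of `y` are different from the root and have degree two. -/
def Chain (T : SimpleGraph V) (c : V) (par : V → V) (y : V) (m : ℕ) : Prop :=
  ∀ s, 1 ≤ s → s ≤ m → par^[s] y ≠ c ∧ deg T (par^[s] y) = 2

variable {T : SimpleGraph V} {W : Finset V} {c : V} {par : V → V} {dep : V → ℕ}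

lemma Below.refl (par : V → V) (v : V) : Below par v v := ⟨0, rfl⟩

lemma below_of_par {v y : V} (h : Below par (par v) y) : Below par v y := by
  obtain ⟨n, hn⟩ := h
  exact ⟨n + 1, hn⟩

lemma chain_zero (T : SimpleGraph V) (c : V) (par : V → V) (y : V) : Chain T c par y 0 :=
  fun _ h1 h2 => absurd (h1.trans h2) (by decide)

lemma Chain.mono {y : V} {m n : ℕ} (h : Chain T c par y n) (hmn : m ≤ n) : Chain T c par y m :=
  fun s h1 h2 => h s h1 (h2.trans hmn)

lemma Chain.iterate {y : V} {m n d : ℕ} (h : Chain T c par y n) (hmn : d + m ≤ n) :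
    Chain T c par (par^[d] y) m := by
  intro s h1 h2
  rw [← Function.iterate_add_apply]
  exact h _ (by omega) (by omega)

lemma Chain.succ {y : V} {m : ℕ} (h : Chain T c par y m) (hc : par^[m + 1] y ≠ c)
    (hd : deg T (par^[m + 1] y) = 2) : Chain T c par y (m + 1) := by
  intro s h1 h2
  rcases Nat.lt_or_ge m s with h3 | h3
  · obtain rfl : s = m + 1 := by omega
    exact ⟨hc, hd⟩
  · exact h s h1 h3

lemma Chain.append {y : V} {m n : ℕ} (h : Chain T c par y m) (h' : Chain T c par (par^[m] y) n) :
    Chain T c par y (m + n) := by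
  intro s h1 h2
  rcases Nat.lt_or_ge m s with h3 | h3
  · have := h' (s - m) (by omega) (by omega)
    rwa [← Function.iterate_add_apply, Nat.sub_add_cancel h3.le] at this
  · exact h s h1 h3

/-- The set of the first `m` proper ancestors of `y`. -/
def segment [DecidableEq V] (par : V → V) (y : V) (m : ℕ) : Finset V :=
  (Finset.range m).image fun s => par^[s + 1] y

lemma mem_segment [DecidableEq V] {y v : V} {m : ℕ} :
    v ∈ segment par y m ↔ ∃ s < m, par^[s + 1] y = v := by
  simp [segment]

lemma card_segment_le [DecidableEq V] (par : V → V) (y : V) (m : ℕ) :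
    (segment par y m).card ≤ m :=
  Finset.card_image_le.trans (Finset.card_range m).le

lemma Chain.leaf_notMem_segment [DecidableEq V] {y v : V} {m : ℕ} (hch : Chain T c par y m)
    (hv : deg T v = 1) : v ∉ segment par y m := by
  rw [mem_segment]
  rintro ⟨s, hs, rfl⟩
  have := (hch (s + 1) (by omega) (by omega)).2
  omega

namespace Rooted

variable (h : Rooted T W c par dep)
include h

lemma iterate_root (n : ℕ) : par^[n] c = c := Function.iterate_fixed h.par_root n

lemma iterate_mem {v : V} (hv : v ∈ W) (n : ℕ) : par^[n] v ∈ W := by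
  induction n with
  | zero => exact hv
  | succ n ih => rw [Function.iterate_succ_apply']; exact h.par_mem ih

lemma ne_root_of_iterate {v : V} {n : ℕ} (hv : par^[n] v ≠ c) : v ≠ c := by
  rintro rfl
  exact hv (h.iterate_root n)

lemma dep_par_le {v : V} (hv : v ∈ W) : dep (par v) ≤ dep v := by
  by_cases hc : v = c
  · rw [hc, h.par_root]
  · have := h.dep_par hv hc
    omega

lemma dep_iterate_le {v : V} (hv : v ∈ W) (n : ℕ) : dep (par^[n] v) ≤ dep v := by
  induction n with
  | zero => exact le_rfl
  | succ n ih =>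
    rw [Function.iterate_succ_apply']
    exact (h.dep_par_le (h.iterate_mem hv n)).trans ih

lemma dep_iterate_succ_lt {v : V} (hv : v ∈ W) (hc : v ≠ c) (n : ℕ) :
    dep (par^[n + 1] v) < dep v := by
  have h1 := h.dep_par hv hc
  have h2 := h.dep_iterate_le (h.par_mem hv) n
  rw [Function.iterate_succ_apply]
  omega

lemma not_below_iterate {y : V} (hy : y ∈ W) (hc : y ≠ c) (n : ℕ) :
    ¬ Below par (par^[n + 1] y) y := by
  rintro ⟨m, hm⟩
  have h1 := h.dep_iterate_succ_lt hy hc n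
  have h2 := h.dep_iterate_le (h.iterate_mem hy (n + 1)) m
  rw [hm] at h2
  omega

lemma iterate_injective {y : V} (hy : y ∈ W) {i j : ℕ} (hi : par^[i] y ≠ c) (hj : par^[j] y ≠ c)
    (hij : par^[i] y = par^[j] y) : i = j := by
  wlog hlt : i ≤ j generalizing i j
  · exact (this hj hi hij.symm (by omega)).symm
  by_contra hne
  obtain ⟨d, rfl⟩ : ∃ d, j = (d + 1) + i := ⟨j - i - 1, by omega⟩
  rw [Function.iterate_add_apply] at hij
  have := h.dep_iterate_succ_lt (h.iterate_mem hy i) hi d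
  rw [← hij] at this
  omega

lemma below_root {v : V} (hv : v ∈ W) : Below par v c := by
  induction hn : dep v using Nat.strong_induction_on generalizing v with
  | _ n ih =>
    by_cases hc : v = c
    · exact ⟨0, hc⟩
    · have := h.dep_par hv hc
      exact below_of_par (ih _ (by omega) (h.par_mem hv) rfl)

lemma exists_child_of_below {u x : V} (hu : u ∈ W) (hux : Below par u x) (hne : u ≠ x) :
    ∃ y ∈ W, y ≠ c ∧ Below par u y ∧ par y = x := by
  obtain ⟨n, hn⟩ := hux
  induction n generalizing x with
  | zero => exact absurd hn hne
  | succ n ih =>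
    rw [Function.iterate_succ_apply'] at hn
    by_cases hc : par^[n] u = c
    · refine ih hne ?_
      rw [← hn, hc, h.par_root]
    · exact ⟨_, h.iterate_mem hu n, hc, ⟨n, rfl⟩, hn⟩

lemma two_le_deg [Finite V] {a : V} (ha : a ∈ W) (hac : a ≠ c) (hpc : par a ≠ c) :
    2 ≤ deg T (par a) := by
  have hne : a ≠ par (par a) := by
    intro heq
    have h1 := h.dep_par ha hac
    have h2 := h.dep_par (h.par_mem ha) hpc
    rw [← heq] at h2
    omega
  rw [← Set.ncard_pair hne]
  refine Set.ncard_le_ncard ?_ (Set.toFinite _)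
  rintro x (rfl | rfl)
  · exact (h.adj_par ha hac).symm
  · exact h.adj_par (h.par_mem ha) hpc

/-- A vertex of degree two other than the root has only one child. -/
lemma eq_of_par_eq [Finite V] {a b : V} (ha : a ∈ W) (hb : b ∈ W) (hab : par a = par b)
    (hc : par a ≠ c) (hd : deg T (par a) = 2) : a = b := by
  have hac : a ≠ c := by rintro rfl; exact hc h.par_root
  have hbc : b ≠ c := by rintro rfl; exact hc (hab.trans h.par_root)
  by_contra hne
  have h1 := h.dep_par ha hac
  have h2 := h.dep_par hb hbc
  have h3 := h.dep_par (h.par_mem ha) hc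
  have hap : a ≠ par (par a) := by intro heq; rw [← heq] at h3; omega
  have hbp : b ≠ par (par a) := by intro heq; rw [← heq] at h3; rw [← hab] at h2; omega
  have h4 : ({a, b, par (par a)} : Set V).ncard ≤ deg T (par a) := by
    refine Set.ncard_le_ncard ?_ (Set.toFinite _)
    rintro x (rfl | rfl | rfl)
    · exact (h.adj_par ha hac).symm
    · rw [hab]; exact (h.adj_par hb hbc).symm
    · exact h.adj_par (h.par_mem ha) hc
  rw [Set.ncard_insert_of_notMem (by simp [hne, hap]) (Set.toFinite _), Set.ncard_pair hbp] at h4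
  omega

/-- A root of degree one has only one child. -/
lemma eq_of_par_eq_root [Finite V] {a b : V} (ha : a ∈ W) (hb : b ∈ W) (hac : a ≠ c) (hbc : b ≠ c)
    (hpa : par a = c) (hpb : par b = c) (hd : deg T c = 1) : a = b := by
  have h1 := h.adj_par ha hac
  have h2 := h.adj_par hb hbc
  rw [hpa] at h1
  rw [hpb] at h2
  exact (Set.ncard_le_one (Set.toFinite _)).1 hd.le _ h1.symm _ h2.symm

lemma eq_of_iterate_eq [Finite V] {y a : V} {m : ℕ} (hy : y ∈ W) (ha : a ∈ W)
    (hch : Chain T c par y m) (heq : par^[m] a = par^[m] y) : a = y := by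
  induction m with
  | zero => exact heq
  | succ m ih =>
    obtain ⟨h1, h2⟩ := hch (m + 1) (by omega) le_rfl
    refine ih (hch.mono (by omega))
      (h.eq_of_par_eq (h.iterate_mem ha m) (h.iterate_mem hy m) ?_ ?_ ?_)
    · rw [← Function.iterate_succ_apply' par, ← Function.iterate_succ_apply' par, heq]
    · rwa [← Function.iterate_succ_apply' par, heq]
    · rwa [← Function.iterate_succ_apply' par, heq]

lemma below_of_below_iterate [Finite V] {y u : V} {m : ℕ} (hy : y ∈ W) (hu : u ∈ W)
    (hd : deg T u = 1) (hch : Chain T c par y m) (hb : Below par u (par^[m] y)) :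
    Below par u y := by
  induction m with
  | zero => exact hb
  | succ m ih =>
    obtain ⟨h1, h2⟩ := hch (m + 1) (by omega) le_rfl
    obtain ⟨n, hn⟩ := hb
    cases n with
    | zero =>
      rw [← hn] at h2
      exact absurd (hd.symm.trans h2) (by decide)
    | succ n =>
      refine ih (hch.mono (by omega)) ⟨n, ?_⟩
      refine h.eq_of_par_eq (h.iterate_mem hu n) (h.iterate_mem hy m) ?_ ?_ ?_
      · rw [← Function.iterate_succ_apply' par, ← Function.iterate_succ_apply' par, hn]
      · rwa [← Function.iterate_succ_apply' par, hn]
      · rwa [← Function.iterate_succ_apply' par, hn]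

lemma exists_leaf_below {y : V} (hy : y ∈ W) (hyc : y ≠ c) :
    ∃ u ∈ W, deg T u = 1 ∧ Below par u y := by
  classical
  obtain ⟨d, hd, hmax⟩ := (W.filter fun v => Below par v y).exists_max_image dep
    ⟨y, Finset.mem_filter.2 ⟨hy, Below.refl par y⟩⟩
  obtain ⟨hdW, n, hn⟩ := Finset.mem_filter.1 hd
  have hdc : d ≠ c := h.ne_root_of_iterate (n := n) (by rw [hn]; exact hyc)
  refine ⟨d, hdW, ?_, n, hn⟩
  rw [deg, Set.ncard_eq_one]
  refine ⟨par d, Set.eq_singleton_iff_unique_mem.2 ⟨h.adj_par hdW hdc, fun x hx => ?_⟩⟩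
  rcases h.par_eq hx with ⟨-, h1⟩ | ⟨hxc, h1⟩
  · exact h1.symm
  · have hxW : x ∈ W := h.adj_mem (T.adj_symm hx)
    have h2 := hmax x (Finset.mem_filter.2 ⟨hxW, below_of_par (by rw [h1]; exact ⟨n, hn⟩)⟩)
    have h3 := h.dep_par hxW hxc
    rw [h1] at h3
    omega

variable [DecidableEq V]

lemma notMem_segment_of_below {y v : V} (hy : y ∈ W) (hyc : y ≠ c) (hv : Below par v y) (m : ℕ) :
    v ∉ segment par y m := by
  rw [mem_segment]
  rintro ⟨s, -, rfl⟩
  exact h.not_below_iterate hy hyc s hv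

lemma cut_reachable_of_below {y v : V} (hy : y ∈ W) (hyc : y ≠ c) (hv : v ∈ W)
    (hb : Below par v y) (m : ℕ) :
    (cut T (segment par y m) y (par^[m + 1] y)).Reachable v y := by
  obtain ⟨n, hn⟩ := hb
  induction n generalizing v with
  | zero => rw [← hn]; exact SimpleGraph.Reachable.refl _
  | succ n ih =>
    by_cases hvy : v = y
    · rw [hvy]
    have hvc : v ≠ c := h.ne_root_of_iterate (n := n + 1) (by rw [hn]; exact hyc)
    refine SimpleGraph.Reachable.trans (SimpleGraph.Adj.reachable ?_) (ih (h.par_mem hv) hn)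
    refine ⟨h.adj_par hv hvc, h.notMem_segment_of_below hy hyc ⟨_, hn⟩ m,
      h.notMem_segment_of_below hy hyc ⟨n, hn⟩ m, fun heq => ?_⟩
    rcases Sym2.eq_iff.1 heq with ⟨h1, -⟩ | ⟨h1, -⟩
    · exact hvy h1
    · exact h.not_below_iterate hy hyc m ⟨n + 1, by rw [← h1]; exact hn⟩

lemma cut_reachable_root [Finite V] {y v : V} {m : ℕ} (hy : y ∈ W)
    (hch : Chain T c par y m) (hv : v ∈ W) (hvs : v ∉ segment par y m) (hb : ¬ Below par v y) :
    (cut T (segment par y m) y (par^[m + 1] y)).Reachable v c := by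
  obtain ⟨n, hn⟩ := h.below_root hv
  induction n generalizing v with
  | zero => rw [← hn]; exact SimpleGraph.Reachable.refl _
  | succ n ih =>
    by_cases hvc : v = c
    · rw [hvc]
    have hps : par v ∉ segment par y m := by
      rw [mem_segment]
      rintro ⟨s, hs, hsv⟩
      obtain ⟨h1, h2⟩ := hch (s + 1) (by omega) (by omega)
      rw [Function.iterate_succ_apply'] at hsv h1 h2
      obtain rfl := h.eq_of_par_eq (h.iterate_mem hy s) hv hsv h1 h2
      cases s with
      | zero => exact hb (Below.refl par _)
      | succ s => exact hvs (mem_segment.2 ⟨s, by omega, rfl⟩)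
    have hpb : ¬ Below par (par v) y := fun hp => hb (below_of_par hp)
    refine SimpleGraph.Reachable.trans (SimpleGraph.Adj.reachable ?_)
      (ih (h.par_mem hv) hps hpb hn)
    refine ⟨h.adj_par hv hvc, hvs, hps, fun heq => ?_⟩
    rcases Sym2.eq_iff.1 heq with ⟨h1, -⟩ | ⟨-, h1⟩
    · exact hb ⟨0, h1⟩
    · exact hpb ⟨0, h1⟩

lemma iterate_notMem_segment {y : V} {m : ℕ} (hy : y ∈ W)
    (hch : Chain T c par y m) : par^[m + 1] y ∉ segment par y m := by
  rw [mem_segment]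
  rintro ⟨s, hs, heq⟩
  have h1 := (hch (s + 1) (by omega) (by omega)).1
  have := h.iterate_injective hy h1 (by rwa [← heq]) heq
  omega

lemma cut_reachable_of_not_below [Finite V] {y v : V} {m : ℕ} (hy : y ∈ W) (hyc : y ≠ c)
    (hch : Chain T c par y m) (hv : v ∈ W) (hvs : v ∉ segment par y m) (hb : ¬ Below par v y) :
    (cut T (segment par y m) y (par^[m + 1] y)).Reachable v (par^[m + 1] y) :=
  (h.cut_reachable_root hy hch hv hvs hb).trans
    (h.cut_reachable_root hy hch (h.iterate_mem hy _) (h.iterate_notMem_segment hy hch)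
      (h.not_below_iterate hy hyc m)).symm

lemma gap [Finite V] {y : V} {m : ℕ} (hy : y ∈ W) (hyc : y ≠ c) (hch : Chain T c par y m) :
    Gap T W (segment par y m) y (par^[m + 1] y) where
  adj_mem := h.adj_mem
  left_mem := hy
  right_mem := h.iterate_mem hy _
  left_notMem := h.notMem_segment_of_below hy hyc (Below.refl par y) m
  right_notMem := h.iterate_notMem_segment hy hch
  ne heq := h.not_below_iterate hy hyc m ⟨0, heq.symm⟩
  left_adj := by
    refine ⟨par y, h.adj_par hy hyc, ?_⟩
    cases m with
    | zero => exact Or.inr rfl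
    | succ m => exact Or.inl (mem_segment.2 ⟨0, by omega, rfl⟩)
  right_adj := by
    have hmc : par^[m] y ≠ c := by
      cases m with
      | zero => exact hyc
      | succ m => exact (hch (m + 1) (by omega) le_rfl).1
    refine ⟨par^[m] y, ?_, ?_⟩
    · rw [Function.iterate_succ_apply']
      exact (h.adj_par (h.iterate_mem hy m) hmc).symm
    · cases m with
      | zero => exact Or.inr rfl
      | succ m => exact Or.inl (mem_segment.2 ⟨m, by omega, rfl⟩)
  reachable s hs hss := by
    by_cases hb : Below par s y
    · exact Or.inl (h.cut_reachable_of_below hy hyc hs hb m)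
    · exact Or.inr (h.cut_reachable_of_not_below hy hyc hch hs hss hb)

end Rooted

end Rooted

section Extremal

/-- `T` is a largest tree with `k + 1` leaves in `G`, on the vertex set `W` and rooted at a leaf,
and the trees with at most `k` leaves are much smaller. -/
structure Extremal (G T : SimpleGraph V) (W : Finset V) (c : V) (par : V → V) (dep : V → ℕ)
    (k : ℕ) : Prop extends Rooted T W c par dep where
  le : T ≤ G
  deg_root : deg T c = 1
  excess_lt : excess T W + 1 ≤ k
  ncard_leaves : {v | v ∈ W ∧ deg T v = 1}.ncard = k + 1
  not_adj : ∀ {u v}, u ∈ W → v ∈ W → deg T u = 1 → deg T v = 1 → ¬ G.Adj u v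
  mem_of_adj : ∀ {u x}, u ∈ W → deg T u = 1 → G.Adj u x → x ∈ W
  add_le : maxKEndedOrder G k + k ≤ W.card

/-- The leaves that are adjacent to `y` in `G` and are not descendants of `y`. -/
def upSet (G T : SimpleGraph V) (W : Finset V) (par : V → V) (y : V) : Set V :=
  {v | v ∈ W ∧ deg T v = 1 ∧ ¬ Below par v y ∧ G.Adj y v}

/-- The leaves below `y` that are adjacent in `G` to the parent of `y`. -/
def downSet (G T : SimpleGraph V) (W : Finset V) (par : V → V) (y : V) : Set V :=
  {u | u ∈ W ∧ deg T u = 1 ∧ Below par u y ∧ G.Adj (par y) u}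

namespace Extremal

variable {T : SimpleGraph V} {W : Finset V} {c : V} {par : V → V} {dep : V → ℕ} {k : ℕ}
  (h : Extremal G T W c par dep k)
include h

lemma not_card_le [DecidableEq V] {y : V} {m : ℕ} (hm : m < k) :
    ¬ (W \ segment par y m).card ≤ maxKEndedOrder G k := by
  have h1 := Finset.le_card_sdiff (segment par y m) W
  have h2 := card_segment_le par y m
  have h3 := h.add_le
  omega

lemma deg_ne_one_of_adj {x v : V} (hx : x ∈ W) (hv : v ∈ W) (hv1 : deg T v = 1)
    (hxv : G.Adj x v) : deg T x ≠ 1 :=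
  fun hx1 => h.not_adj hx hv hx1 hv1 hxv

variable [Finite V]

lemma deg_iterate_lt_three {y v : V} {m : ℕ} (hy : y ∈ W) (hyc : y ≠ c)
    (hch : Chain T c par y m) (hm : m < k) (hv : v ∈ upSet G T W par y) :
    deg T (par^[m + 1] y) < 3 := by
  classical
  obtain ⟨hvW, hv1, hvb, hyv⟩ := hv
  by_contra hlt
  have hvs := hch.leaf_notMem_segment hv1
  exact h.not_card_le hm ((h.gap hy hyc hch).card_le_of_branch h.le hvW hvs hyv hv1
    (h.cut_reachable_of_not_below hy hyc hch hvW hvs hvb) (not_lt.1 hlt) h.excess_lt)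

lemma deg_lt_three {y u : V} {m : ℕ} (hy : y ∈ W) (hyc : y ≠ c)
    (hch : Chain T c par y m) (hm : m < k) (hu : u ∈ W) (hu1 : deg T u = 1)
    (hub : Below par u y) (hadj : G.Adj (par^[m + 1] y) u) : deg T y < 3 := by
  classical
  by_contra hlt
  refine h.not_card_le hm ((h.gap hy hyc hch).symm.card_le_of_branch h.le hu
    (hch.leaf_notMem_segment hu1) hadj hu1 ?_ (not_lt.1 hlt) h.excess_lt)
  rw [cut_comm]
  exact h.cut_reachable_of_below hy hyc hu hub m

lemma not_crossing {y u v : V} {m : ℕ} (hy : y ∈ W) (hyc : y ≠ c)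
    (hch : Chain T c par y m) (hm : m < k) (hu : u ∈ W) (hu1 : deg T u = 1)
    (hv : v ∈ W) (hv1 : deg T v = 1) (huv : u ≠ v)
    (hyv : G.Adj y v) (hbu : G.Adj (par^[m + 1] y) u)
    (hor : ¬ Below par v y ∨ Below par u y) : False := by
  classical
  have hy1 := h.deg_ne_one_of_adj hy hv hv1 hyv
  have hb1 := h.deg_ne_one_of_adj (h.iterate_mem hy _) hu hu1 hbu
  have hus := hch.leaf_notMem_segment hu1
  have hvs := hch.leaf_notMem_segment hv1
  have hgap := h.gap hy hyc hch
  refine h.not_card_le (y := y) hm ?_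
  rcases hor with hb | hb
  · exact hgap.card_le h.le hv hvs hu hus hyv hbu hv1 hu1 huv.symm hy1 hb1
      (h.cut_reachable_of_not_below hy hyc hch hv hvs hb) h.excess_lt
  · refine hgap.symm.card_le h.le hu hus hv hvs hbu hyv hu1 hv1 huv hb1 hy1 ?_ h.excess_lt
    rw [cut_comm]
    exact h.cut_reachable_of_below hy hyc hu hb m

lemma ncard_upSet_le {y : V} (hy : y ∈ W) (hyc : y ≠ c) : (upSet G T W par y).ncard ≤ k := by
  obtain ⟨u, hu, hu1, hub⟩ := h.exists_leaf_below hy hyc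
  rw [← Nat.lt_succ_iff, Nat.succ_eq_add_one, ← h.ncard_leaves]
  refine Set.ncard_lt_ncard ((Set.ssubset_iff_of_subset
    (show upSet G T W par y ⊆ _ from fun v hv => And.intro hv.1 hv.2.1)).2
    ⟨u, ⟨hu, hu1⟩, fun hu' => hu'.2.2.1 hub⟩) (Set.toFinite _)

lemma ncard_downSet_le {y : V} (hyc : y ≠ c) : (downSet G T W par y).ncard ≤ k := by
  rw [← Nat.lt_succ_iff, Nat.succ_eq_add_one, ← h.ncard_leaves]
  refine Set.ncard_lt_ncard ((Set.ssubset_iff_of_subset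
    (show downSet G T W par y ⊆ _ from fun v hv => And.intro hv.1 hv.2.1)).2
    ⟨c, ⟨h.root_mem, h.deg_root⟩, fun hu' => ?_⟩) (Set.toFinite _)
  obtain ⟨n, hn⟩ := hu'.2.2.1
  exact hyc (hn.symm.trans (h.iterate_root n))

lemma downSet_eq_empty_of_mem_upSet {y v : V} (hy : y ∈ W) (hyc : y ≠ c)
    (hv : v ∈ upSet G T W par y) : downSet G T W par y = ∅ := by
  refine Set.eq_empty_of_forall_notMem fun u hu => ?_
  refine h.not_crossing hy hyc (chain_zero T c par y) (by have := h.excess_lt; omega)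
    hu.1 hu.2.1 hv.1 hv.2.1 ?_ hv.2.2.2 hu.2.2.2 (Or.inl hv.2.2.1)
  rintro rfl
  exact hv.2.2.1 hu.2.2.1

lemma chain_of_two_le_ncard_upSet {y : V} (hy : y ∈ W) (hyc : y ≠ c)
    (h2 : 2 ≤ (upSet G T W par y).ncard) : Chain T c par y k := by
  suffices hm : ∀ m ≤ k, Chain T c par y m from hm k le_rfl
  intro m
  induction m with
  | zero => exact fun _ => chain_zero T c par y
  | succ m ih =>
    intro hmk
    have hch := ih (by omega)
    obtain ⟨v, hv, hvc⟩ := Set.exists_ne_of_one_lt_ncard h2 c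
    have hmc : par^[m] y ≠ c := by
      cases m with
      | zero => exact hyc
      | succ m => exact (hch (m + 1) (by omega) le_rfl).1
    have hne : par^[m + 1] y ≠ c := by
      intro heq
      obtain ⟨z, hz, hzc, hvz, hpz⟩ := h.exists_child_of_below hv.1 (h.below_root hv.1) hvc
      rw [Function.iterate_succ_apply'] at heq
      obtain rfl := h.eq_of_par_eq_root hz (h.iterate_mem hy m) hzc hmc hpz heq h.deg_root
      exact hv.2.2.1 (h.below_of_below_iterate hy hv.1 hv.2.1 hch hvz)
    refine hch.succ hne ?_
    have h3 := h.deg_iterate_lt_three hy hyc hch hmk hv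
    have h4 : 2 ≤ deg T (par^[m + 1] y) := by
      rw [Function.iterate_succ_apply'] at hne ⊢
      exact h.two_le_deg (h.iterate_mem hy m) hmc hne
    omega

lemma upSet_iterate_eq_empty {y : V} {i : ℕ} (hy : y ∈ W) (hyc : y ≠ c)
    (h2 : 2 ≤ (upSet G T W par y).ncard) (hi : 1 ≤ i) (hik : i < k) :
    upSet G T W par (par^[i] y) = ∅ := by
  refine Set.eq_empty_of_forall_notMem fun u hu => ?_
  obtain ⟨v, hv, hvu⟩ := Set.exists_ne_of_one_lt_ncard h2 u
  obtain ⟨j, rfl⟩ : ∃ j, i = j + 1 := ⟨i - 1, by omega⟩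
  exact h.not_crossing hy hyc ((h.chain_of_two_le_ncard_upSet hy hyc h2).mono (by omega))
    (by omega) hu.1 hu.2.1 hv.1 hv.2.1 hvu.symm hv.2.2.2 hu.2.2.2 (Or.inl hv.2.2.1)

lemma downSet_iterate_eq_empty {y : V} {i : ℕ} (hy : y ∈ W) (hyc : y ≠ c)
    (h2 : 2 ≤ (upSet G T W par y).ncard) (hik : i < k) :
    downSet G T W par (par^[i] y) = ∅ := by
  refine Set.eq_empty_of_forall_notMem fun u hu => ?_
  obtain ⟨v, hv, hvu⟩ := Set.exists_ne_of_one_lt_ncard h2 u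
  refine h.not_crossing hy hyc ((h.chain_of_two_le_ncard_upSet hy hyc h2).mono hik.le)
    hik hu.1 hu.2.1 hv.1 hv.2.1 hvu.symm hv.2.2.2 ?_ (Or.inl hv.2.2.1)
  rw [Function.iterate_succ_apply']
  exact hu.2.2.2

lemma chain_of_two_le_ncard_downSet {y z : V} {j : ℕ} (hyc : y ≠ c)
    (h2 : 2 ≤ (downSet G T W par y).ncard) (hz : z ∈ W) (hj : j < k) (hzy : par^[j] z = y) :
    Chain T c par z j ∧ deg T z = 2 := by
  induction j generalizing z with
  | zero =>
    refine ⟨chain_zero T c par z, ?_⟩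
    obtain rfl : z = y := hzy
    obtain ⟨u, hu, huz⟩ := Set.exists_ne_of_one_lt_ncard h2 z
    obtain ⟨a, ha, hac, -, haz⟩ := h.exists_child_of_below hu.1 hu.2.2.1 huz
    have h3 := h.two_le_deg ha hac (by rwa [haz])
    have h4 := h.deg_lt_three hz hyc (chain_zero T c par z) hj hu.1 hu.2.1 hu.2.2.1 hu.2.2.2
    rw [haz] at h3
    omega
  | succ j ih =>
    have hzc : z ≠ c := h.ne_root_of_iterate (n := j + 1) (by rwa [hzy])
    have hpc : par z ≠ c := h.ne_root_of_iterate (n := j) (by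
      rw [← Function.iterate_succ_apply, hzy]; exact hyc)
    obtain ⟨h3, h4⟩ := ih (h.par_mem hz) (by omega) hzy
    have hch : Chain T c par z (j + 1) := by
      have h5 : Chain T c par z 1 := (chain_zero T c par z).succ hpc h4
      rw [Nat.add_comm]
      exact h5.append h3
    refine ⟨hch, ?_⟩
    obtain ⟨u, hu, huz⟩ := Set.exists_ne_of_one_lt_ncard h2 z
    have hub := h.below_of_below_iterate hz hu.1 hu.2.1 hch (by rw [hzy]; exact hu.2.2.1)
    obtain ⟨a, ha, hac, -, haz⟩ := h.exists_child_of_below hu.1 hub huz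
    have h5 := h.two_le_deg ha hac (by rwa [haz])
    have h6 := h.deg_lt_three hz hzc hch hj hu.1 hu.2.1 hub
      (by rw [Function.iterate_succ_apply', hzy]; exact hu.2.2.2)
    rw [haz] at h5
    omega

lemma upSet_eq_empty_of_iterate {y z : V} {j : ℕ} (hyc : y ≠ c)
    (h2 : 2 ≤ (downSet G T W par y).ncard) (hz : z ∈ W) (hj : j < k) (hzy : par^[j] z = y) :
    upSet G T W par z = ∅ := by
  refine Set.eq_empty_of_forall_notMem fun v hv => ?_
  obtain ⟨u, hu, huv⟩ := Set.exists_ne_of_one_lt_ncard h2 v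
  have hch := (h.chain_of_two_le_ncard_downSet hyc h2 hz hj hzy).1
  exact h.not_crossing hz (h.ne_root_of_iterate (n := j) (by rwa [hzy])) hch hj
    hu.1 hu.2.1 hv.1 hv.2.1 huv hv.2.2.2
    (by rw [Function.iterate_succ_apply', hzy]; exact hu.2.2.2) (Or.inl hv.2.2.1)

lemma downSet_eq_empty_of_iterate {y z : V} {j : ℕ} (hyc : y ≠ c)
    (h2 : 2 ≤ (downSet G T W par y).ncard) (hz : z ∈ W) (hj1 : 1 ≤ j) (hj : j < k)
    (hzy : par^[j] z = y) : downSet G T W par z = ∅ := by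
  refine Set.eq_empty_of_forall_notMem fun v hv => ?_
  obtain ⟨u, hu, huv⟩ := Set.exists_ne_of_one_lt_ncard h2 v
  obtain ⟨i, rfl⟩ : ∃ i, j = i + 1 := ⟨j - 1, by omega⟩
  have hzy' : par^[i] (par z) = y := hzy
  have hch := (h.chain_of_two_le_ncard_downSet hyc h2 (h.par_mem hz) (by omega) hzy').1
  refine h.not_crossing (h.par_mem hz) (h.ne_root_of_iterate (n := i) (by rwa [hzy'])) hch
    (by omega) hu.1 hu.2.1 hv.1 hv.2.1 huv hv.2.2.2
    (by rw [Function.iterate_succ_apply', hzy']; exact hu.2.2.2) (Or.inr ?_)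
  exact h.below_of_below_iterate (h.par_mem hz) hu.1 hu.2.1 hch (by rw [hzy']; exact hu.2.2.1)

end Extremal

end Extremal

section Count

namespace Extremal

variable [Finite V] {T : SimpleGraph V} {W : Finset V} {c : V} {par : V → V} {dep : V → ℕ} {k : ℕ}
  (h : Extremal G T W c par dep k)
include h

/-- The vertices charged to `y`: its nearest ancestors or its nearest descendants. -/
lemma exists_charged [DecidableEq V] {y : V} (hy : y ∈ W) (hyc : y ≠ c) :
    ∃ S ⊆ W.erase c,
      (upSet G T W par y).ncard + (downSet G T W par y).ncard ≤ S.card ∧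
      ∀ z ∈ S, (∃ i < (upSet G T W par y).ncard, par^[i] y = z) ∨
        ∃ i < (downSet G T W par y).ncard, par^[i] z = y := by
  rcases (upSet G T W par y).eq_empty_or_nonempty with hA | ⟨v, hv⟩
  · rcases (downSet G T W par y).eq_empty_or_nonempty with hB | ⟨u, hu⟩
    · exact ⟨∅, by simp, by simp [hA, hB], by simp⟩
    obtain ⟨n, hn⟩ := hu.2.2.1
    have hlen : (downSet G T W par y).ncard ≤ n + 1 := by
      by_contra hlt
      have hk := h.ncard_downSet_le hyc
      have := (h.chain_of_two_le_ncard_downSet hyc (by omega) hu.1 (by omega) hn).2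
      have := hu.2.1
      omega
    have hit : ∀ i < (downSet G T W par y).ncard, par^[i] (par^[n - i] u) = y := by
      intro i hi
      rw [← Function.iterate_add_apply, Nat.add_sub_cancel' (by omega), hn]
    have hnc : ∀ i < (downSet G T W par y).ncard, par^[n - i] u ≠ c := fun i hi =>
      h.ne_root_of_iterate (n := i) (by rwa [hit i hi])
    refine ⟨(Finset.range (downSet G T W par y).ncard).image fun i => par^[n - i] u, ?_, ?_, ?_⟩
    · intro z hz
      obtain ⟨i, hi, rfl⟩ := Finset.mem_image.1 hz
      exact Finset.mem_erase.2 ⟨hnc i (Finset.mem_range.1 hi), h.iterate_mem hu.1 _⟩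
    · rw [Finset.card_image_of_injOn, Finset.card_range, hA, Set.ncard_empty, Nat.zero_add]
      intro i hi j hj hij
      have hi' := Finset.mem_range.1 hi
      have hj' := Finset.mem_range.1 hj
      have := h.iterate_injective hu.1 (hnc i hi') (hnc j hj') hij
      omega
    · intro z hz
      obtain ⟨i, hi, rfl⟩ := Finset.mem_image.1 hz
      exact Or.inr ⟨i, Finset.mem_range.1 hi, hit i (Finset.mem_range.1 hi)⟩
  · have hnc : ∀ i < (upSet G T W par y).ncard, par^[i] y ≠ c := by
      intro i hi
      have hk := h.ncard_upSet_le hy hyc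
      cases i with
      | zero => exact hyc
      | succ i =>
        exact (h.chain_of_two_le_ncard_upSet hy hyc (by omega) (i + 1) (by omega) (by omega)).1
    refine ⟨(Finset.range (upSet G T W par y).ncard).image fun i => par^[i] y, ?_, ?_, ?_⟩
    · intro z hz
      obtain ⟨i, hi, rfl⟩ := Finset.mem_image.1 hz
      exact Finset.mem_erase.2 ⟨hnc i (Finset.mem_range.1 hi), h.iterate_mem hy _⟩
    · rw [Finset.card_image_of_injOn, Finset.card_range, h.downSet_eq_empty_of_mem_upSet hy hyc hv,
        Set.ncard_empty, Nat.add_zero]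
      intro i hi j hj hij
      exact h.iterate_injective hy (hnc i (Finset.mem_range.1 hi)) (hnc j (Finset.mem_range.1 hj))
        hij
    · intro z hz
      obtain ⟨i, hi, rfl⟩ := Finset.mem_image.1 hz
      exact Or.inl ⟨i, Finset.mem_range.1 hi, rfl⟩

lemma eq_of_iterate_eq_iterate {y y' : V} (hy : y ∈ W) (hyc : y ≠ c) (hy' : y' ∈ W)
    (hyc' : y' ≠ c) {i i' : ℕ} (hi : i < (upSet G T W par y).ncard)
    (hi' : i' < (upSet G T W par y').ncard)
    (heq : par^[i] y = par^[i'] y') : y = y' := by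
  wlog hle : i ≤ i' generalizing y y' i i'
  · exact (this hy' hyc' hy hyc hi' hi heq.symm (by omega)).symm
  have hk := h.ncard_upSet_le hy' hyc'
  by_contra hne
  obtain ⟨d, rfl⟩ : ∃ d, i' = i + d := ⟨i' - i, by omega⟩
  by_cases hid : i + d = 0
  · obtain ⟨rfl, rfl⟩ : i = 0 ∧ d = 0 := by omega
    exact hne heq
  have hch := h.chain_of_two_le_ncard_upSet hy' hyc' (by omega)
  have hyy : y = par^[d] y' := by
    rw [Function.iterate_add_apply] at heq
    exact h.eq_of_iterate_eq (h.iterate_mem hy' d) hy (hch.iterate (by omega)) heq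
  rcases Nat.eq_zero_or_pos d with rfl | hd
  · exact hne hyy
  · have := h.upSet_iterate_eq_empty (i := d) hy' hyc' (by omega) hd (by omega)
    rw [hyy, this, Set.ncard_empty] at hi
    omega

lemma eq_of_iterate_eq_of_iterate_eq {y y' z : V} (hyc : y ≠ c) (hyc' : y' ≠ c) (hz : z ∈ W)
    {i i' : ℕ} (hi : i < (downSet G T W par y).ncard) (hi' : i' < (downSet G T W par y').ncard)
    (hzy : par^[i] z = y) (hzy' : par^[i'] z = y') : y = y' := by
  wlog hle : i ≤ i' generalizing y y' i i'
  · exact (this hyc' hyc hi' hi hzy' hzy (by omega)).symm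
  have hk := h.ncard_downSet_le hyc'
  by_contra hne
  obtain ⟨d, rfl⟩ : ∃ d, i' = d + i := ⟨i' - i, by omega⟩
  rw [Function.iterate_add_apply, hzy] at hzy'
  rcases Nat.eq_zero_or_pos d with rfl | hd
  · exact hne hzy'
  · have hy : y ∈ W := hzy ▸ h.iterate_mem hz i
    rw [h.downSet_eq_empty_of_iterate hyc' (by omega) hy hd (by omega) hzy', Set.ncard_empty] at hi
    omega

lemma eq_of_iterate_iterate_eq {y y' : V} (hyc : y ≠ c) (hy' : y' ∈ W) (hyc' : y' ≠ c)
    {i j : ℕ} (hi : i < (upSet G T W par y').ncard) (hj : j < (downSet G T W par y).ncard)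
    (heq : par^[j] (par^[i] y') = y) : y = y' := by
  have hkA := h.ncard_upSet_le hy' hyc'
  have hkB := h.ncard_downSet_le hyc
  rcases Nat.eq_zero_or_pos i with rfl | hi0
  · rcases Nat.eq_zero_or_pos j with rfl | hj0
    · exact heq.symm
    · rw [h.upSet_eq_empty_of_iterate hyc (by omega) hy' (by omega) heq, Set.ncard_empty] at hi
      omega
  rcases Nat.eq_zero_or_pos j with rfl | hj0
  · have := h.downSet_iterate_eq_empty (i := i) hy' hyc' (by omega) (by omega)
    rw [show par^[i] y' = y from heq] at this
    rw [this, Set.ncard_empty] at hj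
    omega
  exfalso
  have hchA := h.chain_of_two_le_ncard_upSet hy' hyc' (by omega)
  have hchB := (h.chain_of_two_le_ncard_downSet hyc (by omega) (h.iterate_mem hy' i) (by omega)
    heq).1
  have hch : Chain T c par y' (i + j) := (hchA.mono (by omega)).append hchB
  have heq' : par^[i + j] y' = y := by
    rw [Nat.add_comm, Function.iterate_add_apply, heq]
  have hbelow : ∀ u ∈ downSet G T W par y, Below par u y' := fun u hu =>
    h.below_of_below_iterate hy' hu.1 hu.2.1 hch (by rw [heq']; exact hu.2.2.1)
  have hdisj : Disjoint (upSet G T W par y') (downSet G T W par y) :=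
    Set.disjoint_left.2 fun v hv hv' => hv.2.2.1 (hbelow v hv')
  have hcard : (upSet G T W par y').ncard + (downSet G T W par y).ncard ≤ k + 1 := by
    rw [← Set.ncard_union_eq hdisj (Set.toFinite _) (Set.toFinite _), ← h.ncard_leaves]
    refine Set.ncard_le_ncard ?_ (Set.toFinite _)
    rintro v (hv | hv)
    · exact ⟨hv.1, hv.2.1⟩
    · exact ⟨hv.1, hv.2.1⟩
  obtain ⟨u, hu⟩ := Set.nonempty_of_ncard_ne_zero (Nat.ne_zero_of_lt hj)
  obtain ⟨v, hv⟩ := Set.nonempty_of_ncard_ne_zero (Nat.ne_zero_of_lt hi)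
  refine h.not_crossing hy' hyc' hch (by omega) hu.1 hu.2.1 hv.1 hv.2.1 ?_ hv.2.2.2 ?_
    (Or.inl hv.2.2.1)
  · rintro rfl
    exact hv.2.2.1 (hbelow u hu)
  · rw [Function.iterate_succ_apply', heq']
    exact hu.2.2.2

lemma sum_ncard_lt [DecidableEq V] :
    ∑ y ∈ W.erase c, ((upSet G T W par y).ncard + (downSet G T W par y).ncard) < W.card := by
  have hex : ∀ y, ∃ S ⊆ W.erase c, y ∈ W.erase c →
      (upSet G T W par y).ncard + (downSet G T W par y).ncard ≤ S.card ∧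
      ∀ z ∈ S, (∃ i < (upSet G T W par y).ncard, par^[i] y = z) ∨
        ∃ i < (downSet G T W par y).ncard, par^[i] z = y := by
    intro y
    by_cases hy : y ∈ W.erase c
    · obtain ⟨S, h1, h2⟩ := h.exists_charged (Finset.mem_of_mem_erase hy)
        (Finset.ne_of_mem_erase hy)
      exact ⟨S, h1, fun _ => h2⟩
    · exact ⟨∅, by simp, fun hy' => absurd hy' hy⟩
  choose S hS hS' using hex
  have hdisj : (W.erase c : Set V).PairwiseDisjoint S := by
    intro y hy y' hy' hne
    refine Finset.disjoint_left.2 fun z hz hz' => hne ?_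
    have hzW : z ∈ W := Finset.mem_of_mem_erase (hS y hz)
    obtain ⟨hyc, hyW⟩ := Finset.mem_erase.1 (Finset.mem_coe.1 hy)
    obtain ⟨hyc', hyW'⟩ := Finset.mem_erase.1 (Finset.mem_coe.1 hy')
    rcases (hS' y hy).2 z hz with ⟨i, hi, hiz⟩ | ⟨i, hi, hiz⟩ <;>
      rcases (hS' y' hy').2 z hz' with ⟨j, hj, hjz⟩ | ⟨j, hj, hjz⟩
    · exact h.eq_of_iterate_eq_iterate hyW hyc hyW' hyc' hi hj (hiz.trans hjz.symm)
    · exact (h.eq_of_iterate_iterate_eq hyc' hyW hyc hi hj (by rw [hiz, hjz])).symm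
    · exact h.eq_of_iterate_iterate_eq hyc hyW' hyc' hj hi (by rw [hjz, hiz])
    · exact h.eq_of_iterate_eq_of_iterate_eq hyc hyc' hzW hi hj hiz hjz
  calc ∑ y ∈ W.erase c, ((upSet G T W par y).ncard + (downSet G T W par y).ncard)
      ≤ ∑ y ∈ W.erase c, (S y).card := Finset.sum_le_sum fun y hy => (hS' y hy).1
    _ = ((W.erase c).biUnion S).card := (Finset.card_biUnion hdisj).symm
    _ ≤ (W.erase c).card := Finset.card_le_card (Finset.biUnion_subset.2 fun y _ => hS y)
    _ < W.card := Finset.card_erase_lt_of_mem h.root_mem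

/-- The leaves have small degree sum. -/
lemma sum_degree_lt [Fintype V] [DecidableEq V] [DecidableRel G.Adj] :
    ∑ u ∈ W with deg T u = 1, G.degree u < W.card := by
  classical
  refine lt_of_le_of_lt ?_ h.sum_ncard_lt
  have hA : ∀ y, (upSet G T W par y).ncard =
      ((W.filter fun u => deg T u = 1).filter fun u => u ∈ upSet G T W par y).card := by
    intro y
    rw [← Set.ncard_coe_finset]
    congr 1
    ext u
    simp only [Finset.coe_filter, Finset.mem_filter, Set.mem_ofPred_eq]
    exact ⟨fun hu => ⟨⟨hu.1, hu.2.1⟩, hu⟩, fun hu => hu.2⟩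
  have hB : ∀ y, (downSet G T W par y).ncard =
      ((W.filter fun u => deg T u = 1).filter fun u => u ∈ downSet G T W par y).card := by
    intro y
    rw [← Set.ncard_coe_finset]
    congr 1
    ext u
    simp only [Finset.coe_filter, Finset.mem_filter, Set.mem_ofPred_eq]
    exact ⟨fun hu => ⟨⟨hu.1, hu.2.1⟩, hu⟩, fun hu => hu.2⟩
  have hsumA := Finset.sum_card_bipartiteAbove_eq_sum_card_bipartiteBelow
    (s := W.erase c) (t := W.filter fun u => deg T u = 1) (fun y u => u ∈ upSet G T W par y)
  have hsumB := Finset.sum_card_bipartiteAbove_eq_sum_card_bipartiteBelow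
    (s := W.erase c) (t := W.filter fun u => deg T u = 1) (fun y u => u ∈ downSet G T W par y)
  simp only [Finset.bipartiteAbove, Finset.bipartiteBelow] at hsumA hsumB
  simp only [hA, hB]
  rw [Finset.sum_add_distrib, hsumA, hsumB, ← Finset.sum_add_distrib]
  refine Finset.sum_le_sum fun u hu => ?_
  obtain ⟨huW, hu1⟩ := Finset.mem_filter.1 hu
  rw [← SimpleGraph.card_neighborFinset_eq_degree]
  refine le_trans (Finset.card_le_card (t := ((W.erase c).filter fun y => u ∈ upSet G T W par y) ∪
    ((W.erase c).filter fun y => u ∈ downSet G T W par y).image par) ?_)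
    ((Finset.card_union_le _ _).trans (Nat.add_le_add_left Finset.card_image_le _))
  intro x hx
  rw [SimpleGraph.mem_neighborFinset] at hx
  have hxW := h.mem_of_adj huW hu1 hx
  by_cases hb : Below par u x
  · obtain ⟨y, hy, hyc, huy, rfl⟩ := h.exists_child_of_below huW hb hx.ne
    exact Finset.mem_union_right _ (Finset.mem_image.2 ⟨y, Finset.mem_filter.2
      ⟨Finset.mem_erase.2 ⟨hyc, hy⟩, huW, hu1, huy, hx.symm⟩, rfl⟩)
  · refine Finset.mem_union_left _ (Finset.mem_filter.2
      ⟨Finset.mem_erase.2 ⟨?_, hxW⟩, huW, hu1, hb, hx.symm⟩)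
    rintro rfl
    exact hb (h.below_root huW)

end Extremal

end Count

section Tree

lemma exists_parent {X : Type*} {T : SimpleGraph X} (hT : T.IsTree) (c : X) :
    ∃ (par : X → X) (dep : X → ℕ), par c = c ∧
      (∀ v, v ≠ c → T.Adj v (par v) ∧ dep v = dep (par v) + 1) ∧
      ∀ a b, T.Adj a b → (a ≠ c ∧ par a = b) ∨ (b ≠ c ∧ par b = a) := by
  choose p hp hu using fun v => hT.existsUnique_path v c
  refine ⟨fun v => (p v).snd, fun v => (p v).length, ?_, ?_, ?_⟩
  · have : p c = SimpleGraph.Walk.nil := (hu c _ SimpleGraph.Walk.IsPath.nil).symm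
    simp [this]
  · intro v hv
    have hnil := SimpleGraph.Walk.not_nil_of_ne (p := p v) hv
    refine ⟨(p v).adj_snd hnil, ?_⟩
    dsimp only
    rw [← hu _ _ (hp v).tail, SimpleGraph.Walk.length_tail_add_one hnil]
  · intro a b hab
    by_cases hmem : a ∈ (p b).support
    · refine Or.inr ⟨?_, (hT.isAcyclic.eq_snd_of_adj_start (hp b) hab.symm hmem).symm⟩
      rintro rfl
      rw [← hu b _ SimpleGraph.Walk.IsPath.nil, SimpleGraph.Walk.support_nil,
        List.mem_singleton] at hmem
      exact hab.ne hmem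
    · refine Or.inl ⟨?_, ?_⟩
      · rintro rfl
        exact hmem (p b).end_mem_support
      · dsimp only
        rw [← hu a _ ((hp b).cons (h := hab) hmem), SimpleGraph.Walk.snd_cons]

variable {T : SimpleGraph V} {W : Finset V} (hmem : ∀ {a b}, T.Adj a b → a ∈ W)
  (hT : (T.induce (W : Set V)).IsTree)
include hmem hT

lemma exists_rooted {c : V} (hc : c ∈ W) : ∃ par dep, Rooted T W c par dep := by
  classical
  obtain ⟨par, dep, h1, h2, h3⟩ := exists_parent hT ⟨c, hc⟩
  have hpar : ∀ {v} (hv : v ∈ W), (if hv : v ∈ W then (par ⟨v, hv⟩ : V) else v) = par ⟨v, hv⟩ :=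
    fun hv => dif_pos hv
  have hne : ∀ {v} (hv : v ∈ W), v ≠ c → (⟨v, hv⟩ : (W : Set V)) ≠ ⟨c, hc⟩ :=
    fun hv hvc heq => hvc (congrArg Subtype.val heq)
  refine ⟨fun v => if hv : v ∈ W then (par ⟨v, hv⟩ : V) else v,
    fun v => if hv : v ∈ W then dep ⟨v, hv⟩ else 0, hc, ?_, ?_, ?_, ?_, hmem, ?_⟩
  · exact (hpar hc).trans (congrArg Subtype.val h1)
  · intro v hv
    rw [hpar hv]
    exact (par ⟨v, hv⟩).2
  · intro v hv hvc
    rw [hpar hv]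
    exact (h2 _ (hne hv hvc)).1
  · intro v hv hvc
    rw [hpar hv, dif_pos hv, dif_pos (Finset.mem_coe.1 (par ⟨v, hv⟩).2)]
    exact (h2 _ (hne hv hvc)).2
  · intro a b hab
    have ha := hmem hab
    have hb := hmem hab.symm
    rw [hpar ha, hpar hb]
    rcases h3 ⟨a, ha⟩ ⟨b, hb⟩ hab with ⟨h4, h5⟩ | ⟨h4, h5⟩
    · exact Or.inl ⟨fun heq => h4 (Subtype.ext heq), congrArg Subtype.val h5⟩
    · exact Or.inr ⟨fun heq => h4 (Subtype.ext heq), congrArg Subtype.val h5⟩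

lemma spans_of_isTree : Spans T W where
  left_mem := hmem
  nonempty := by
    obtain ⟨x⟩ := hT.connected.nonempty
    exact ⟨x.1, x.2⟩
  reachable := by
    intro a b ha hb
    exact (hT.connected.preconnected ⟨a, ha⟩ ⟨b, hb⟩).map
      (SimpleGraph.Embedding.induce (W : Set V)).toHom

lemma ncard_leaves_eq (h2 : 2 ≤ W.card) :
    {v | v ∈ W ∧ deg T v = 1}.ncard = excess T W + 2 := by
  have : Nontrivial (W : Set V) :=
    Set.nontrivial_coe_sort.2 (Finset.one_lt_card_iff_nontrivial.1 h2)
  rw [← excess_induce hmem, ← card_leaves_eq hT,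
    ← Set.ncard_image_of_injective _ Subtype.val_injective]
  congr 1
  ext v
  constructor
  · rintro ⟨hv, hv1⟩
    exact ⟨⟨v, hv⟩, (deg_induce hmem ⟨v, hv⟩).trans hv1, rfl⟩
  · rintro ⟨v, hv, rfl⟩
    exact ⟨v.2, (deg_induce hmem v).symm.trans hv⟩

variable [Finite V]

lemma not_adj_of_deg_eq_one (h3 : 3 ≤ W.card) {u v : V} (hu1 : deg T u = 1) (hv1 : deg T v = 1) :
    ¬ T.Adj u v := by
  classical
  intro huv
  obtain ⟨par, dep, hR⟩ := exists_rooted hmem hT (hmem huv)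
  have hsub : W ⊆ {u, v} := by
    intro x hx
    by_contra hne
    simp only [Finset.mem_insert, Finset.mem_singleton, not_or] at hne
    obtain ⟨y, hy, hyu, hxy, hpy⟩ := hR.exists_child_of_below hx (hR.below_root hx) hne.1
    have hadj := (hR.adj_par hy hyu).symm
    rw [hpy] at hadj
    obtain rfl : y = v := (Set.ncard_le_one (Set.toFinite _)).1 hu1.le _ hadj _ huv
    obtain ⟨z, hz, hzu, -, hpz⟩ := hR.exists_child_of_below hx hxy hne.2
    have hadj' := (hR.adj_par hz hzu).symm
    rw [hpz] at hadj'
    exact hzu ((Set.ncard_le_one (Set.toFinite _)).1 hv1.le _ hadj' _ huv.symm)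
  have := (Finset.card_le_card hsub).trans Finset.card_le_two
  omega

/-- Joining two leaves closes a cycle and saves a leaf. -/
lemma card_le_of_adj_leaves (hTG : T ≤ G) (h3 : 3 ≤ W.card) {k : ℕ} (hk : excess T W + 1 ≤ k)
    {u v : V} (hu : u ∈ W) (hv : v ∈ W) (hu1 : deg T u = 1) (hv1 : deg T v = 1)
    (huv : G.Adj u v) : W.card ≤ maxKEndedOrder G k := by
  refine (spans_of_isTree hmem hT).card_le_of_lt (F' := T ⊔ SimpleGraph.edge u v) (a := u) (b := v)
    (sup_le hTG ((SimpleGraph.edge_le_iff _).2 (Or.inr huv))) le_sup_left ?_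
    (Or.inr ((SimpleGraph.edge_adj _ _ _ _).2 ⟨Or.inl ⟨rfl, rfl⟩, huv.ne⟩))
    (not_adj_of_deg_eq_one hmem hT h3 hu1 hv1)
    (le_trans (Nat.succ_le_succ (Finset.sum_le_sum fun a _ => ?_)) hk)
  · rintro a b (hab | hab)
    · exact hmem hab
    · rw [SimpleGraph.edge_adj] at hab
      rcases hab.1 with ⟨rfl, -⟩ | ⟨rfl, -⟩
      exacts [hu, hv]
  · by_cases ha : a = u ∨ a = v
    · have h1 := deg_sup_edge_le T u v a
      have h2 : deg T a = 1 := by rcases ha with rfl | rfl <;> assumption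
      omega
    · rw [not_or] at ha
      rw [deg_sup_edge_of_ne T ha.1 ha.2]

/-- A tree with a leaf adjacent to an outside vertex can be extended without adding leaves. -/
lemma card_lt_of_adj_notMem (hTG : T ≤ G) {k : ℕ} (hk : excess T W + 2 ≤ k)
    {u w : V} (hu : u ∈ W) (hu1 : deg T u = 1) (huw : G.Adj u w) (hw : w ∉ W) :
    W.card < maxKEndedOrder G k := by
  classical
  have hspan := spans_of_isTree hmem hT
  have hadj : (T ⊔ SimpleGraph.edge u w).Adj u w :=
    Or.inr ((SimpleGraph.edge_adj _ _ _ _).2 ⟨Or.inl ⟨rfl, rfl⟩, huw.ne⟩)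
  have hsp : Spans (T ⊔ SimpleGraph.edge u w) (insert w W) := by
    refine ⟨?_, ⟨w, Finset.mem_insert_self w W⟩, ?_⟩
    · rintro a b (hab | hab)
      · exact Finset.mem_insert_of_mem (hmem hab)
      · rw [SimpleGraph.edge_adj] at hab
        rcases hab.1 with ⟨rfl, -⟩ | ⟨rfl, -⟩
        exacts [Finset.mem_insert_of_mem hu, Finset.mem_insert_self _ W]
    · have key : ∀ a ∈ insert w W, (T ⊔ SimpleGraph.edge u w).Reachable a u := by
        intro a ha
        rcases Finset.mem_insert.1 ha with rfl | ha
        · exact hadj.symm.reachable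
        · exact (hspan.reachable ha hu).mono le_sup_left
      intro a b ha hb
      exact (key a ha).trans (key b hb).symm
  have := hsp.card_le (sup_le hTG ((SimpleGraph.edge_le_iff _).2 (Or.inr huw)))
    (le_trans (Nat.add_le_add_right ?_ 2) hk)
  · rw [Finset.card_insert_of_notMem hw] at this
    omega
  · have hw0 : deg T w = 0 := by
      rw [deg, Set.ncard_eq_zero (Set.toFinite _)]
      exact Set.eq_empty_of_forall_notMem fun x hx => hw (hmem hx)
    have hw1 := deg_sup_edge_le T u w w
    rw [excess, Finset.sum_insert hw, Nat.sub_eq_zero_of_le (by omega), Nat.zero_add]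
    refine Finset.sum_le_sum fun a ha => ?_
    by_cases hau : a = u
    · have := deg_sup_edge_le T u w a
      subst hau
      omega
    · rw [deg_sup_edge_of_ne T hau (by rintro rfl; exact hw ha)]

/-- In a largest tree with `k + 1` leaves, the leaves are independent with small degree sum, if the
trees with at most `k` leaves are much smaller. -/
lemma isIndSet_leaves_and_sum_degree_lt [Fintype V] [DecidableRel G.Adj] (hTG : T ≤ G) {k : ℕ}
    (hk : 1 ≤ k) (h3 : 3 ≤ W.card) (hleaves : {v | v ∈ W ∧ deg T v = 1}.ncard = k + 1)
    (hmax : maxKEndedOrder G (k + 1) = W.card) (hlt : maxKEndedOrder G k + k ≤ W.card) :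
    IsIndSet G {v | v ∈ W ∧ deg T v = 1} ∧ ∑ u ∈ W with deg T u = 1, G.degree u < W.card := by
  classical
  have hex := ncard_leaves_eq hmem hT (by omega)
  have hnot : ∀ {u v}, u ∈ W → v ∈ W → deg T u = 1 → deg T v = 1 → ¬ G.Adj u v := by
    intro u v hu hv hu1 hv1 huv
    have := card_le_of_adj_leaves hmem hT hTG h3 (k := k) (by omega) hu hv hu1 hv1 huv
    omega
  refine ⟨fun u hu v hv => hnot hu.1 hv.1 hu.2 hv.2, ?_⟩
  obtain ⟨c, hc, hc1⟩ := Set.nonempty_of_ncard_ne_zero (s := {v | v ∈ W ∧ deg T v = 1}) (by omega)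
  obtain ⟨par, dep, hR⟩ := exists_rooted hmem hT hc
  have hE : Extremal G T W c par dep k :=
    { hR with
      le := hTG
      deg_root := hc1
      excess_lt := by omega
      ncard_leaves := hleaves
      not_adj := hnot
      mem_of_adj := by
        intro u x hu hu1 hux
        by_contra hx
        have := card_lt_of_adj_notMem hmem hT hTG (k := k + 1) (by omega) hu hu1 hux hx
        omega
      add_le := hlt }
  exact hE.sum_degree_lt

end Tree

end KEnded

/-- **Corollary 4.** If `G` is connected and `σ_{k+1} ≥ t_{k+1}` for some
positive integer `k`, then `t_k ≥ t_{k+1} - k + 1`. -/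
theorem corollary4 [Fintype V] (G : SimpleGraph V) [DecidableRel G.Adj]
    (hG : G.Connected) (k : ℕ) (hk : 1 ≤ k)
    (h : (maxKEndedOrder G (k + 1) : ℕ∞) ≤ minDegreeSum G (k + 1)) :
    maxKEndedOrder G k + k ≥ maxKEndedOrder G (k + 1) + 1 := by
  classical
  by_contra hcon
  have hlt : maxKEndedOrder G k + k ≤ maxKEndedOrder G (k + 1) := by omega
  obtain ⟨H, hH, hcard⟩ : maxKEndedOrder G (k + 1) ∈
      {n | ∃ H : G.Subgraph, IsKEndedTree G (k + 1) H ∧ H.verts.ncard = n} := by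
    refine Nat.sSup_mem ?_ (KEnded.bddAbove_orders G (k + 1))
    by_contra hempty
    rw [Set.not_nonempty_iff_eq_empty] at hempty
    have h0 : maxKEndedOrder G (k + 1) = 0 := by rw [maxKEndedOrder, hempty, csSup_empty]; rfl
    omega
  have hnot : ¬ IsKEndedTree G k H := by
    intro hH'
    have := KEnded.ncard_le_maxKEndedOrder hH'
    omega
  have hcyc : ¬ IsCycleSubgraph H := fun hc => hnot (Or.inr ⟨hk, hc⟩)
  obtain ⟨hT, hend⟩ : H.coe.IsTree ∧ endVertexCount H ≤ k + 1 :=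
    hH.resolve_right fun hc => hcyc hc.2
  have hend' : endVertexCount H = k + 1 := by
    refine le_antisymm hend (Nat.lt_of_not_le fun hle => hnot (Or.inl ⟨hT, hle⟩))
  have h3 : 3 ≤ H.verts.ncard := by
    by_contra h3
    exact hcyc ⟨⟨hT.connected⟩, Or.inl (by omega)⟩
  have hW : (H.verts.toFinset : Set V) = H.verts := Set.coe_toFinset _
  have hWcard : H.verts.toFinset.card = H.verts.ncard := (Set.ncard_eq_toFinset_card' _).symm
  have hT' : (H.spanningCoe.induce (H.verts.toFinset : Set V)).IsTree := by
    rw [hW]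
    exact hT
  have hleaves : {v | v ∈ H.verts.toFinset ∧ KEnded.deg H.spanningCoe v = 1}.ncard = k + 1 := by
    rw [← hend']
    simp only [Set.mem_toFinset]
    rfl
  obtain ⟨hind, hsum⟩ := KEnded.isIndSet_leaves_and_sum_degree_lt
    (fun hab => Set.mem_toFinset.2 (H.edge_vert hab)) hT' H.spanningCoe_le hk (by omega) hleaves
    (by omega) (by omega)
  have hle : minDegreeSum G (k + 1) ≤
      ∑ u ∈ H.verts.toFinset with KEnded.deg H.spanningCoe u = 1, (G.degree u : ℕ∞) := by
    refine iInf₂_le _ ⟨?_, ?_⟩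
    · rw [← hleaves, ← Set.ncard_coe_finset, Finset.coe_filter]
    · rw [Finset.coe_filter]
      exact hind
  have := h.trans hle
  rw [← Nat.cast_sum, Nat.cast_le] at this
  omega
end

section
/- Let G be a connected graph with σ_2 ≥ t_{k+1} − λ(k − 1) for some positive integers λ, k. Then t_k ≥ t_{k+1} − λ + 1. (Corollary 5) -/
open SimpleGraph

variable {V : Type*}

/-- `w` is a child of `v` in the tree on `S` with root `r` and parent function `p`. -/
def IsChild (S : Finset V) (r : V) (p : V → V) (v w : V) : Prop :=
  w ∈ S ∧ w ≠ r ∧ p w = v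

/-- `v` has at least two neighbours in the tree on `S` with root `r` and parent function `p`. -/
def IsInner (S : Finset V) (r : V) (p : V → V) (v : V) : Prop :=
  (v ≠ r ∧ ∃ w, IsChild S r p v w) ∨ ∃ a b, a ≠ b ∧ IsChild S r p v a ∧ IsChild S r p v b

/-- `p` is the parent function of a tree in `G` with vertex set `S` and root `r`. -/
structure IsParentTree (G : SimpleGraph V) (S : Finset V) (r : V) (p : V → V) : Prop where
  root_mem : r ∈ S
  parent_root : p r = r
  parent_mem : ∀ v ∈ S, p v ∈ S
  adj : ∀ v ∈ S, v ≠ r → G.Adj v (p v)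
  rank : ∃ d : V → ℕ, ∀ v ∈ S, v ≠ r → d (p v) < d v

namespace IsParentTree

variable {G : SimpleGraph V} {S : Finset V} {r : V} {p : V → V}

lemma iterate_mem (h : IsParentTree G S r p) {v : V} (hv : v ∈ S) (i : ℕ) : p^[i] v ∈ S := by
  induction i with
  | zero => exact hv
  | succ i ih => rw [Function.iterate_succ_apply']; exact h.parent_mem _ ih

lemma iterate_root (h : IsParentTree G S r p) (i : ℕ) : p^[i] r = r :=
  Function.iterate_fixed h.parent_root i

lemma iterate_ne_root_of_le (h : IsParentTree G S r p) {v : V} {i j : ℕ} (hij : i ≤ j)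
    (hj : p^[j] v ≠ r) : p^[i] v ≠ r := by
  intro hi
  obtain ⟨m, rfl⟩ := Nat.exists_eq_add_of_le' hij
  rw [Function.iterate_add_apply, hi, h.iterate_root] at hj
  exact hj rfl

lemma isChild_iterate (h : IsParentTree G S r p) {v : V} (hv : v ∈ S) {i : ℕ}
    (hi : p^[i] v ≠ r) : IsChild S r p (p^[i + 1] v) (p^[i] v) :=
  ⟨h.iterate_mem hv i, hi, (Function.iterate_succ_apply' p i v).symm⟩

lemma exists_child_root (h : IsParentTree G S r p) {v : V} (hv : v ∈ S) (hvr : v ≠ r) :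
    ∃ c, IsChild S r p r c := by
  obtain ⟨d, hd⟩ := h.rank
  induction hn : d v using Nat.strong_induction_on generalizing v with
  | _ n ih =>
    by_cases hp : p v = r
    · exact ⟨v, hv, hvr, hp⟩
    · exact ih _ (hn ▸ hd v hv hvr) (h.parent_mem v hv) hp rfl

lemma iterate_ne_of_lt (h : IsParentTree G S r p) {v : V} (hv : v ∈ S) {i j : ℕ} (hij : i < j)
    (hj : p^[j] v ≠ r) : p^[i] v ≠ p^[j] v := by
  obtain ⟨d, hd⟩ := h.rank
  suffices d (p^[j] v) < d (p^[i] v) from fun e ↦ by simp [e] at this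
  induction j, hij using Nat.le_induction with
  | base =>
    rw [Function.iterate_succ_apply']
    exact hd _ (h.iterate_mem hv i) (h.iterate_ne_root_of_le (Nat.le_succ i) hj)
  | succ j hij ih =>
    have hj' := h.iterate_ne_root_of_le (Nat.le_succ j) hj
    refine lt_trans ?_ (ih hj')
    rw [Function.iterate_succ_apply']
    exact hd _ (h.iterate_mem hv j) hj'

/-- If no ancestor of a childless vertex branches, the tree is the path from it to the root. -/
lemma exists_iterate_eq_of_forall_unique (h : IsParentTree G S r p) {v : V} (hv : v ∈ S)
    (hleaf : ∀ w, ¬ IsChild S r p v w)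
    (huniq : ∀ i a b, IsChild S r p (p^[i] v) a → IsChild S r p (p^[i] v) b → a = b)
    {s : V} (hs : s ∈ S) : ∃ i, p^[i] v = s := by
  obtain ⟨d, hd⟩ := h.rank
  have hroot : ∃ i, p^[i] v = r := by
    clear hleaf huniq
    induction hn : d v using Nat.strong_induction_on generalizing v with
    | _ n ih =>
      by_cases hp : v = r
      · exact ⟨0, hp⟩
      · obtain ⟨i, hi⟩ := ih _ (hn ▸ hd v hv hp) (h.parent_mem v hv) rfl
        exact ⟨i + 1, hi⟩
  induction hn : d s using Nat.strong_induction_on generalizing s with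
  | _ n ih =>
    by_cases hsr : s = r
    · exact hsr ▸ hroot
    obtain ⟨i, hi⟩ := ih _ (hn ▸ hd s hs hsr) (h.parent_mem s hs) rfl
    induction i with
    | zero => exact absurd ⟨hs, hsr, hi.symm⟩ (hleaf s)
    | succ j ihj =>
      by_cases hj : p^[j] v = r
      · refine ihj ?_
        rw [← hi, Function.iterate_succ_apply', hj, h.parent_root]
      · exact ⟨j, huniq (j + 1) _ _ (h.isChild_iterate hv hj) ⟨hs, hsr, hi.symm⟩⟩

/-- A subgraph containing all parent edges is connected. -/
lemma subgraph_connected (h : IsParentTree G S r p) {H : G.Subgraph} (hverts : H.verts = ↑S)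
    (hadj : ∀ v ∈ S, v ≠ r → H.Adj v (p v)) : H.Connected := by
  obtain ⟨d, hd⟩ := h.rank
  have hmem : ∀ v, v ∈ H.verts ↔ v ∈ S := by simp [hverts]
  have key : ∀ n v (hv : v ∈ S), d v = n →
      H.coe.Reachable ⟨v, (hmem v).2 hv⟩ ⟨r, (hmem r).2 h.root_mem⟩ := by
    intro n
    induction n using Nat.strong_induction_on with
    | _ n ih =>
      intro v hv hn
      by_cases hvr : v = r
      · subst hvr; rfl
      · have hadj' : H.coe.Adj ⟨v, (hmem v).2 hv⟩ ⟨p v, (hmem _).2 (h.parent_mem v hv)⟩ :=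
          hadj v hv hvr
        exact hadj'.reachable.trans (ih _ (hn ▸ hd v hv hvr) _ (h.parent_mem v hv) rfl)
  refine ⟨?_⟩
  have : Nonempty H.verts := ⟨⟨r, (hmem r).2 h.root_mem⟩⟩
  refine ⟨fun a b ↦ ?_⟩
  exact (key _ a.1 ((hmem _).1 a.2) rfl).trans (key _ b.1 ((hmem _).1 b.2) rfl).symm

/-- The subgraph formed by the edges joining the vertices of a tree to their parents. -/
def toSubgraph (h : IsParentTree G S r p) : G.Subgraph where
  verts := ↑S
  Adj a b := IsChild S r p a b ∨ IsChild S r p b a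
  adj_sub := by
    rintro a b (⟨hb, hbr, rfl⟩ | ⟨ha, har, rfl⟩)
    · exact (h.adj b hb hbr).symm
    · exact h.adj a ha har
  edge_vert := by
    rintro a b (⟨hb, _, rfl⟩ | ⟨ha, _, _⟩)
    · exact h.parent_mem b hb
    · exact ha
  symm := ⟨fun _ _ hab ↦ hab.symm⟩

lemma toSubgraph_isTree (h : IsParentTree G S r p) : h.toSubgraph.coe.IsTree := by
  classical
  have hconn : h.toSubgraph.coe.Connected :=
    (h.subgraph_connected rfl fun v hv hvr ↦ Or.inr ⟨hv, hvr, rfl⟩).coe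
  have : Finite h.toSubgraph.verts := S.finite_toSet
  refine isTree_iff_connected_and_card.2
    ⟨hconn, le_antisymm ?_ hconn.card_vert_le_card_edgeSet_add_one⟩
  have hcard : Nat.card h.toSubgraph.verts = (S.erase r).card + 1 := by
    rw [Finset.card_erase_add_one h.root_mem]
    exact Nat.card_eq_finsetCard S
  rw [hcard, Nat.add_le_add_iff_right, ← Nat.card_eq_finsetCard]
  have hS : ∀ v : ↥(S.erase r), v.1 ∈ S := fun v ↦ Finset.mem_of_mem_erase v.2
  let f : ↥(S.erase r) → h.toSubgraph.coe.edgeSet := fun v ↦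
    ⟨s(⟨v.1, hS v⟩, ⟨p v.1, h.parent_mem _ (hS v)⟩),
      Or.inr ⟨hS v, Finset.ne_of_mem_erase v.2, rfl⟩⟩
  refine Nat.card_le_card_of_surjective f ?_
  rintro ⟨e, he⟩
  induction e using Sym2.ind with
  | _ a b =>
    obtain ⟨a, ha⟩ := a
    obtain ⟨b, hb⟩ := b
    rcases he with ⟨h1, h2, h3⟩ | ⟨h1, h2, h3⟩
    · refine ⟨⟨b, Finset.mem_erase.2 ⟨h2, h1⟩⟩, ?_⟩
      simp only at h3
      simp only [f, h3]
      exact Subtype.ext Sym2.eq_swap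
    · refine ⟨⟨a, Finset.mem_erase.2 ⟨h2, h1⟩⟩, ?_⟩
      simp only at h3
      simp [f, h3]

end IsParentTree

lemma card_verts_le_maxKEndedOrder [Finite V] {G : SimpleGraph V} {k : ℕ} {H : G.Subgraph}
    (hH : IsKEndedTree G k H) : H.verts.ncard ≤ maxKEndedOrder G k := by
  refine le_csSup ⟨Nat.card V, ?_⟩ ⟨H, hH, rfl⟩
  rintro n ⟨H', -, rfl⟩
  exact Set.ncard_le_card _

/-- `X` contains every end-vertex of the tree on `S` with root `r` and parent function `p`. -/
def CoversEnds (S : Finset V) (r : V) (p : V → V) (X : Finset V) : Prop :=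
  ∀ v ∈ S, v ∉ X → IsInner S r p v

namespace IsParentTree

variable {G : SimpleGraph V} {S X : Finset V} {r : V} {p : V → V} {k : ℕ}

lemma exists_neighbors_of_isInner (h : IsParentTree G S r p) {v : V} (hv : v ∈ S)
    (hi : IsInner S r p v) : ∃ a b, a ≠ b ∧
      (IsChild S r p v a ∨ IsChild S r p a v) ∧ (IsChild S r p v b ∨ IsChild S r p b v) := by
  rcases hi with ⟨hvr, w, hw⟩ | ⟨a, b, hab, ha, hb⟩
  · refine ⟨w, p v, ?_, Or.inl hw, Or.inr ⟨hv, hvr, rfl⟩⟩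
    rintro rfl
    obtain ⟨d, hd⟩ := h.rank
    have h1 := hd _ hv hvr
    have h2 := hd _ hw.1 hw.2.1
    rw [hw.2.2] at h2
    omega
  · exact ⟨a, b, hab, Or.inl ha, Or.inl hb⟩

lemma card_le_maxKEndedOrder [Finite V] (h : IsParentTree G S r p) (hX : CoversEnds S r p X)
    (hk : X.card ≤ k) : S.card ≤ maxKEndedOrder G k := by
  have hH : IsKEndedTree G k h.toSubgraph := by
    refine Or.inl ⟨h.toSubgraph_isTree, le_trans ?_ hk⟩
    rw [← Set.ncard_coe_finset X]
    refine Set.ncard_le_ncard ?_ X.finite_toSet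
    rintro v ⟨hv, hcard⟩
    by_contra hvX
    obtain ⟨a, b, hab, ha, hb⟩ := h.exists_neighbors_of_isInner hv (hX v hv hvX)
    obtain ⟨c, hc⟩ := Set.ncard_eq_one.1 hcard
    have ha' : a ∈ h.toSubgraph.neighborSet v := ha
    have hb' : b ∈ h.toSubgraph.neighborSet v := hb
    rw [hc, Set.mem_singleton_iff] at ha' hb'
    exact hab (ha'.trans hb'.symm)
  have hle := card_verts_le_maxKEndedOrder hH
  rwa [show h.toSubgraph.verts = ↑S from rfl, Set.ncard_coe_finset] at hle

end IsParentTree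

/-- A tree contained in `G` has a parent function for every choice of the root. -/
lemma exists_isParentTree_of_isTree [Fintype V] {G : SimpleGraph V} {H : G.Subgraph}
    (hH : H.coe.IsTree) {r : V} {S : Finset V} (hS : (S : Set V) = H.verts) (hr : r ∈ S) :
    ∃ p, IsParentTree G S r p ∧ (∀ v ∈ S, v ≠ r → H.Adj v (p v)) ∧
      ∀ a b, H.Adj a b → IsChild S r p a b ∨ IsChild S r p b a := by
  classical
  have hmem : ∀ v, v ∈ S ↔ v ∈ H.verts := fun v ↦ by rw [← hS, Finset.mem_coe]
  let r' : H.verts := ⟨r, (hmem r).1 hr⟩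
  have huniq : ∀ v a b : H.verts, H.coe.Adj v a → H.coe.Adj v b →
      H.coe.dist v r' = H.coe.dist a r' + 1 → H.coe.dist v r' = H.coe.dist b r' + 1 → a = b := by
    intro v a b ha hb hda hdb
    obtain ⟨qa, hqa⟩ := hH.connected.exists_walk_length_eq_dist a r'
    obtain ⟨qb, hqb⟩ := hH.connected.exists_walk_length_eq_dist b r'
    have h1 : (Walk.cons ha qa).IsPath := Walk.isPath_of_length_eq_dist _ (by simp [hqa, hda])
    have h2 : (Walk.cons hb qb).IsPath := Walk.isPath_of_length_eq_dist _ (by simp [hqb, hdb])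
    have := congrArg Walk.snd ((hH.existsUnique_path v r').unique h1 h2)
    simpa using this
  have hex : ∀ v : H.verts, v ≠ r' → ∃ a, H.coe.Adj v a ∧
      H.coe.dist v r' = H.coe.dist a r' + 1 := by
    intro v hv
    obtain ⟨q, hq⟩ := hH.connected.exists_walk_length_eq_dist v r'
    cases q with
    | nil => exact absurd rfl hv
    | cons ha q =>
      rename_i a
      refine ⟨a, ha, ?_⟩
      have h1 := dist_le q
      have h2 := hH.dist_eq_dist_add_one_of_adj r' ha
      simp only [Walk.length_cons] at hq
      rw [dist_comm (u := r'), dist_comm (u := r')] at h2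
      omega
  choose f hf hfd using hex
  let p : V → V := fun v ↦ if hv : ∃ hv : v ∈ H.verts, (⟨v, hv⟩ : H.verts) ≠ r' then
    (f ⟨v, hv.1⟩ hv.2).1 else v
  have hp : ∀ (v : H.verts) (hv : v ≠ r'), p v.1 = (f v hv).1 := fun v hv ↦
    dif_pos ⟨v.2, hv⟩
  have hne : ∀ (v : V) (hv : v ∈ H.verts), v ≠ r → (⟨v, hv⟩ : H.verts) ≠ r' :=
    fun v hv hvr e ↦ hvr (congrArg Subtype.val e)
  have hpr : p r = r := dif_neg fun ⟨_, h⟩ ↦ h rfl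
  have hadj : ∀ v ∈ S, v ≠ r → H.Adj v (p v) := by
    intro v hv hvr
    rw [hp ⟨v, (hmem v).1 hv⟩ (hne v _ hvr)]
    exact hf _ (hne v _ hvr)
  refine ⟨p, ⟨hr, hpr, ?_, fun v hv hvr ↦ H.adj_sub (hadj v hv hvr), ?_⟩, hadj, ?_⟩
  · intro v hv
    by_cases hvr : v = r
    · rw [hvr, hpr]; exact hr
    · rw [hp ⟨v, (hmem v).1 hv⟩ (hne v _ hvr), hmem]
      exact Subtype.prop _
  · refine ⟨fun v ↦ if hv : v ∈ H.verts then H.coe.dist ⟨v, hv⟩ r' else 0, ?_⟩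
    intro v hv hvr
    have h1 := hfd _ (hne v ((hmem v).1 hv) hvr)
    rw [hp ⟨v, (hmem v).1 hv⟩ (hne v _ hvr)]
    simp only [Subtype.coe_eta, Subtype.prop, dif_pos, (hmem v).1 hv]
    omega
  · have key : ∀ a b : H.verts, H.coe.Adj a b →
        H.coe.dist a r' = H.coe.dist b r' + 1 → IsChild S r p b.1 a.1 := by
      intro a b hab hd
      have har : a ≠ r' := by rintro rfl; simp at hd
      refine ⟨(hmem _).2 a.2, fun e ↦ har (Subtype.ext e), ?_⟩
      rw [hp a har, huniq a _ b (hf a har) hab (hfd a har) hd]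
    intro a b hab
    have hab' : H.coe.Adj ⟨a, H.edge_vert hab⟩ ⟨b, H.edge_vert hab.symm⟩ := hab
    have h2 := hH.dist_eq_dist_add_one_of_adj r' hab'
    rw [dist_comm (u := r'), dist_comm (u := r')] at h2
    rcases h2 with h2 | h2
    · exact Or.inr (key _ _ hab' h2)
    · exact Or.inl (key _ _ hab'.symm h2)

namespace IsParentTree

variable {G : SimpleGraph V} {S X : Finset V} {r : V} {p : V → V} {k : ℕ}

/-- Hanging the subtree below `w` at a vertex `u` outside that subtree gives a tree. -/
lemma swap [DecidableEq V] (h : IsParentTree G S r p) {w u : V} (hwr : w ≠ r)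
    (hu : u ∈ S) (hadj : G.Adj w u) (hdesc : ∀ i, p^[i] u ≠ w) :
    IsParentTree G S r (Function.update p w u) := by
  classical
  refine ⟨h.root_mem, ?_, ?_, ?_, ?_⟩
  · rw [Function.update_of_ne hwr.symm, h.parent_root]
  · intro v hv
    by_cases hvw : v = w
    · rwa [hvw, Function.update_self]
    · rw [Function.update_of_ne hvw]; exact h.parent_mem v hv
  · intro v hv hvr
    by_cases hvw : v = w
    · rwa [hvw, Function.update_self]
    · rw [Function.update_of_ne hvw]; exact h.adj v hv hvr
  · obtain ⟨d, hd⟩ := h.rank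
    refine ⟨fun v ↦ if ∃ i, p^[i] v = w then d v + d u + 1 else d v, fun v hv hvr ↦ ?_⟩
    by_cases hvw : v = w
    · subst hvw
      have h1 : ¬ ∃ i, p^[i] u = v := fun ⟨i, hi⟩ ↦ hdesc i hi
      have h2 : ∃ i, p^[i] v = v := ⟨0, rfl⟩
      simp only [Function.update_self, if_neg h1, if_pos h2]
      omega
    · have hlt := hd v hv hvr
      have hiff : (∃ i, p^[i] (p v) = w) ↔ ∃ i, p^[i] v = w := by
        refine ⟨fun ⟨i, hi⟩ ↦ ⟨i + 1, hi⟩, ?_⟩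
        rintro ⟨_ | i, hi⟩
        · exact absurd hi hvw
        · exact ⟨i, hi⟩
      simp only [Function.update_of_ne hvw, hiff]
      split_ifs <;> omega

end IsParentTree

section Swap

variable [DecidableEq V] {S X : Finset V} {r : V} {p : V → V}

lemma IsChild.swap {u v w c : V} (hc : IsChild S r p v c) (hcw : c ≠ w) :
    IsChild S r (Function.update p w u) v c :=
  ⟨hc.1, hc.2.1, by rw [Function.update_of_ne hcw, hc.2.2]⟩

lemma isChild_swap_self {u w : V} (hw : w ∈ S) (hwr : w ≠ r) :
    IsChild S r (Function.update p w u) u w :=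
  ⟨hw, hwr, Function.update_self ..⟩

lemma IsInner.swap {u v w : V} (hv : IsInner S r p v) (hvw : v ≠ p w) :
    IsInner S r (Function.update p w u) v := by
  have hne : ∀ c, IsChild S r p v c → c ≠ w := by
    rintro c hc rfl
    exact hvw hc.2.2.symm
  rcases hv with ⟨hvr, c, hc⟩ | ⟨a, b, hab, ha, hb⟩
  · exact Or.inl ⟨hvr, c, hc.swap (hne c hc)⟩
  · exact Or.inr ⟨a, b, hab, ha.swap (hne a ha), hb.swap (hne b hb)⟩

lemma IsParentTree.isInner_swap_self {G : SimpleGraph V} (h : IsParentTree G S r p) {u w : V}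
    (hw : w ∈ S) (hwr : w ≠ r) (huw : u ≠ p w) : IsInner S r (Function.update p w u) u := by
  by_cases hur : u = r
  · subst hur
    obtain ⟨c, hc⟩ := h.exists_child_root hw hwr
    have hcw : c ≠ w := by
      rintro rfl
      exact huw hc.2.2.symm
    exact Or.inr ⟨c, w, hcw, hc.swap hcw, isChild_swap_self hw hwr⟩
  · exact Or.inl ⟨hur, w, isChild_swap_self hw hwr⟩

lemma IsParentTree.coversEnds_swap {G : SimpleGraph V} (h : IsParentTree G S r p)
    (hX : CoversEnds S r p X) {u w : V} (hw : w ∈ S) (hwr : w ≠ r) (huw : u ≠ p w) :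
    CoversEnds S r (Function.update p w u) (insert (p w) (X.erase u)) := by
  intro v hv hvX
  rw [Finset.mem_insert, Finset.mem_erase, not_or] at hvX
  by_cases hvu : v = u
  · subst hvu
    exact h.isInner_swap_self hw hwr huw
  · exact (hX v hv fun hmem ↦ hvX.2 ⟨hvu, hmem⟩).swap hvX.1

lemma IsParentTree.coversEnds_swap_of_branch {G : SimpleGraph V} (h : IsParentTree G S r p)
    (hX : CoversEnds S r p X) {u w c : V} (hw : w ∈ S) (hwr : w ≠ r) (huw : u ≠ p w)
    (hpw : p w ≠ r) (hc : IsChild S r p (p w) c) (hcw : c ≠ w) :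
    CoversEnds S r (Function.update p w u) (X.erase u) := by
  intro v hv hvX
  by_cases hvw : v = p w
  · subst hvw
    exact Or.inl ⟨hpw, c, hc.swap hcw⟩
  · refine h.coversEnds_swap hX hw hwr huw v hv ?_
    rw [Finset.mem_insert, not_or]
    exact ⟨hvw, hvX⟩

end Swap

section Reroot

variable [DecidableEq V] {G : SimpleGraph V} {S X : Finset V} {r : V} {p : V → V}

namespace IsParentTree

/-- Moving the root to one of its children. -/
lemma rerootChild (h : IsParentTree G S r p) {c : V} (hc : IsChild S r p r c) :
    IsParentTree G S c (Function.update (Function.update p r c) c c) := by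
  obtain ⟨hcS, hcr, hpc⟩ := hc
  have hr : Function.update (Function.update p r c) c c r = c := by
    rw [Function.update_of_ne hcr.symm, Function.update_self]
  have hother : ∀ v, v ≠ r → v ≠ c →
      Function.update (Function.update p r c) c c v = p v := fun v hvr hvc ↦ by
    rw [Function.update_of_ne hvc, Function.update_of_ne hvr]
  refine ⟨hcS, Function.update_self .., ?_, ?_, ?_⟩
  · intro v hv
    by_cases hvc : v = c
    · rw [hvc, Function.update_self]; exact hcS
    by_cases hvr : v = r
    · rw [hvr, hr]; exact hcS
    · rw [hother v hvr hvc]; exact h.parent_mem v hv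
  · intro v hv hvc
    by_cases hvr : v = r
    · rw [hvr, hr]; exact (hpc ▸ h.adj c hcS hcr).symm
    · rw [hother v hvr hvc]; exact h.adj v hv hvr
  · obtain ⟨d, hd⟩ := h.rank
    refine ⟨fun v ↦ if v = c then 0 else d v + 1, fun v hv hvc ↦ ?_⟩
    by_cases hvr : v = r
    · rw [hvr, hr]; simp [hcr.symm]
    · have := hd v hv hvr
      simp only [hother v hvr hvc, if_neg hvc]
      split_ifs <;> omega

lemma _root_.IsChild.rerootChild {c v a : V} (ha : IsChild S r p v a) (hac : a ≠ c) :
    IsChild S c (Function.update (Function.update p r c) c c) v a :=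
  ⟨ha.1, hac, by rw [Function.update_of_ne hac, Function.update_of_ne ha.2.1, ha.2.2]⟩

lemma isChild_rerootChild (h : IsParentTree G S r p) {c : V} (hc : IsChild S r p r c) :
    IsChild S c (Function.update (Function.update p r c) c c) c r :=
  ⟨h.root_mem, hc.2.1.symm, by rw [Function.update_of_ne hc.2.1.symm, Function.update_self]⟩

lemma coversEnds_rerootChild (h : IsParentTree G S r p) (hX : CoversEnds S r p X) {c : V}
    (hc : IsChild S r p r c) :
    CoversEnds S c (Function.update (Function.update p r c) c c) X := by
  intro v hv hvX
  have hvi := hX v hv hvX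
  have hne : v ≠ r → ∀ a, IsChild S r p v a → a ≠ c := by
    rintro hvr a ha rfl
    exact hvr (ha.2.2.symm.trans hc.2.2)
  by_cases hvc : v = c
  · subst hvc
    obtain ⟨a, ha⟩ : ∃ a, IsChild S r p v a := by
      rcases hvi with ⟨-, a, ha⟩ | ⟨a, -, -, ha, -⟩ <;> exact ⟨a, ha⟩
    exact Or.inr ⟨a, r, ha.2.1, ha.rerootChild (hne hc.2.1 a ha), h.isChild_rerootChild hc⟩
  refine Or.inl ⟨hvc, ?_⟩
  by_cases hvr : v = r
  · subst hvr
    rcases hvi with ⟨hvv, -⟩ | ⟨a, b, hab, ha, hb⟩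
    · exact absurd rfl hvv
    · by_cases hac : a = c
      · exact ⟨b, hb.rerootChild fun hbc ↦ hab (hac.trans hbc.symm)⟩
      · exact ⟨a, ha.rerootChild hac⟩
  · rcases hvi with ⟨-, a, ha⟩ | ⟨a, -, -, ha, -⟩ <;>
      exact ⟨a, ha.rerootChild (hne hvr a ha)⟩

/-- Every vertex of a tree may serve as its root. -/
lemma exists_reroot (h : IsParentTree G S r p) (hX : CoversEnds S r p X) {c : V} (hc : c ∈ S) :
    ∃ q, IsParentTree G S c q ∧ CoversEnds S c q X := by
  suffices ∃ q, IsParentTree G S c q ∧ CoversEnds S c q X ∧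
      ∀ a b, IsChild S r p a b → IsChild S c q a b ∨ IsChild S c q b a by
    obtain ⟨q, h1, h2, -⟩ := this
    exact ⟨q, h1, h2⟩
  obtain ⟨d, hd⟩ := h.rank
  induction hn : d c using Nat.strong_induction_on generalizing c with
  | _ n ih =>
    by_cases hcr : c = r
    · subst hcr
      exact ⟨p, h, hX, fun a b hab ↦ Or.inl hab⟩
    obtain ⟨q, hq, hqX, hqc⟩ := ih _ (hn ▸ hd c hc hcr) (h.parent_mem c hc) rfl
    have hchild : IsChild S (p c) q (p c) c := by
      rcases hqc (p c) c ⟨hc, hcr, rfl⟩ with hch | hch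
      · exact hch
      · exact absurd rfl hch.2.1
    have hstep : ∀ a b, IsChild S (p c) q a b →
        IsChild S c (Function.update (Function.update q (p c) c) c c) a b ∨
        IsChild S c (Function.update (Function.update q (p c) c) c c) b a := by
      intro a b hab
      by_cases hbc : b = c
      · subst hbc
        rw [← hab.2.2, hchild.2.2]
        exact Or.inr (hq.isChild_rerootChild hchild)
      · exact Or.inl (hab.rerootChild hbc)
    refine ⟨_, hq.rerootChild hchild, hq.coversEnds_rerootChild hqX hchild, fun a b hab ↦ ?_⟩
    rcases hqc a b hab with hab | hab
    · exact hstep a b hab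
    · exact (hstep b a hab).symm

end IsParentTree

end Reroot

lemma iterate_congr_of_eq {α : Type*} {f g : α → α} {a : α} {m : ℕ}
    (h : ∀ i < m, g (f^[i] a) = f (f^[i] a)) : g^[m] a = f^[m] a := by
  induction m with
  | zero => rfl
  | succ m ih =>
    rw [Function.iterate_succ_apply', Function.iterate_succ_apply',
      ih fun i hi ↦ h i (hi.trans m.lt_succ_self), h m m.lt_succ_self]

/-- `v` has at least two children. -/
def IsBranch (S : Finset V) (r : V) (p : V → V) (v : V) : Prop :=
  ∃ a b, a ≠ b ∧ IsChild S r p v a ∧ IsChild S r p v b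

lemma IsBranch.exists_child_ne {S : Finset V} {r : V} {p : V → V} {v : V}
    (h : IsBranch S r p v) (w : V) : ∃ c, c ≠ w ∧ IsChild S r p v c := by
  obtain ⟨a, b, hab, ha, hb⟩ := h
  by_cases haw : a = w
  · exact ⟨b, fun hbw ↦ hab (haw.trans hbw.symm), hb⟩
  · exact ⟨a, haw, ha⟩

lemma card_insert_erase_le [DecidableEq V] {X : Finset V} {u : V} (hu : u ∈ X) (b : V) :
    (insert b (X.erase u)).card ≤ X.card := by
  have := Finset.card_insert_le b (X.erase u)
  rwa [Finset.card_erase_add_one hu] at this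

namespace IsParentTree

variable [Finite V] {G : SimpleGraph V} {S X : Finset V} {r : V} {p : V → V} {k : ℕ}

lemma not_isInner_of_lt (h : IsParentTree G S r p) (hX : CoversEnds S r p X)
    (hk : X.card ≤ k + 1) (hlt : maxKEndedOrder G k < S.card) {v : V} (hv : v ∈ X) :
    ¬ IsInner S r p v := by
  classical
  intro hi
  refine hlt.not_ge (h.card_le_maxKEndedOrder (X := X.erase v) (fun w hw hwX ↦ ?_) ?_)
  · by_cases hwv : w = v
    · exact hwv ▸ hi
    · exact hX w hw fun hmem ↦ hwX (Finset.mem_erase.2 ⟨hwv, hmem⟩)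
  · rw [Finset.card_erase_of_mem hv]; omega

/-- Removing an end-vertex together with its ancestors below the first branch vertex. -/
lemma card_le_add_of_isBranch (h : IsParentTree G S r p) (hX : CoversEnds S r p X)
    (hk : X.card ≤ k + 1) {v : V} (hv : v ∈ S) (hvX : v ∈ X)
    (hleaf : ∀ w, ¬ IsChild S r p v w) {m : ℕ} (hm : p^[m] v ≠ r)
    (hbr : IsBranch S r p (p^[m] v)) : S.card ≤ maxKEndedOrder G k + m := by
  classical
  induction m generalizing S X v with
  | zero =>
    obtain ⟨a, -, -, ha, -⟩ := hbr
    exact absurd ha (hleaf a)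
  | succ m ih =>
    have hvr : v ≠ r := h.iterate_ne_root_of_le (Nat.zero_le _) hm
    have hpr : p v ≠ r := h.iterate_ne_root_of_le (i := 1) (by omega) hm
    have hmemS : ∀ {s}, s ∈ S.erase v ↔ s ≠ v ∧ s ∈ S := Finset.mem_erase
    have hT : IsParentTree G (S.erase v) r p := by
      refine ⟨hmemS.2 ⟨hvr.symm, h.root_mem⟩, h.parent_root, fun s hs ↦ ?_,
        fun s hs ↦ h.adj s (hmemS.1 hs).2, ?_⟩
      · refine hmemS.2 ⟨fun e ↦ ?_, h.parent_mem s (hmemS.1 hs).2⟩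
        by_cases hsr : s = r
        · rw [hsr, h.parent_root] at e
          exact hvr e.symm
        · exact hleaf s ⟨(hmemS.1 hs).2, hsr, e⟩
      · obtain ⟨d, hd⟩ := h.rank
        exact ⟨d, fun s hs ↦ hd s (hmemS.1 hs).2⟩
    have hchild : ∀ {s c}, IsChild S r p s c → c ≠ v → IsChild (S.erase v) r p s c :=
      fun hc hcv ↦ ⟨hmemS.2 ⟨hcv, hc.1⟩, hc.2⟩
    have hinner : ∀ {s}, IsInner S r p s → s ≠ p v → IsInner (S.erase v) r p s := by
      intro s hs hsv
      have hne : ∀ c, IsChild S r p s c → c ≠ v := by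
        rintro c hc rfl
        exact hsv hc.2.2.symm
      rcases hs with ⟨hsr, c, hc⟩ | ⟨a, b, hab, ha, hb⟩
      · exact Or.inl ⟨hsr, c, hchild hc (hne c hc)⟩
      · exact Or.inr ⟨a, b, hab, hchild ha (hne a ha), hchild hb (hne b hb)⟩
    have hcov : CoversEnds (S.erase v) r p (insert (p v) (X.erase v)) := by
      intro s hs hsX
      rw [Finset.mem_insert, Finset.mem_erase, not_or] at hsX
      exact hinner (hX s (hmemS.1 hs).2 fun hmem ↦ hsX.2 ⟨(hmemS.1 hs).1, hmem⟩) hsX.1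
    have hcard : (S.erase v).card + 1 = S.card := Finset.card_erase_add_one hv
    by_cases hother : ∃ c, c ≠ v ∧ IsChild S r p (p v) c
    · obtain ⟨c, hcv, hc⟩ := hother
      have := hT.card_le_maxKEndedOrder (X := X.erase v) (k := k) (fun s hs hsX ↦ ?_)
        (by rw [Finset.card_erase_of_mem hvX]; omega)
      · omega
      · by_cases hsv : s = p v
        · exact hsv ▸ Or.inl ⟨hpr, c, hchild hc hcv⟩
        · exact hcov s hs (by simp only [Finset.mem_insert, not_or]; exact ⟨hsv, hsX⟩)
    · have hpv : ∀ c, IsChild S r p (p v) c → c = v :=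
        fun c hc ↦ by_contra fun hcv ↦ hother ⟨c, hcv, hc⟩
      have hpvS : p v ∈ S.erase v := hmemS.2 ⟨(h.adj v hv hvr).ne', h.parent_mem v hv⟩
      have := ih hT hcov ((card_insert_erase_le hvX _).trans hk) hpvS
        (Finset.mem_insert_self _ _)
        (fun c hc ↦ (hmemS.1 hc.1).1 (hpv c ⟨(hmemS.1 hc.1).2, hc.2⟩)) hm ?_
      · omega
      · obtain ⟨a, b, hab, ha, hb⟩ := hbr
        have hne : ∀ c, IsChild S r p (p^[m + 1] v) c → c ≠ v := by
          rintro c hc rfl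
          have e : p^[m + 1] c = p c := hc.2.2.symm
          rw [e] at ha hb
          exact hab ((hpv a ha).trans (hpv b hb).symm)
        exact ⟨a, b, hab, hchild ha (hne a ha), hchild hb (hne b hb)⟩

/-- If the root and another end-vertex are adjacent and the path joining them passes a branch
vertex, the number of end-vertices can be lowered without losing vertices. -/
lemma card_le_of_adj_of_isBranch (h : IsParentTree G S r p) (hX : CoversEnds S r p X)
    (hk : X.card ≤ k + 1) {v : V} (hv : v ∈ S) (hvr : v ≠ r) (hrX : r ∈ X) (hvX : v ∈ X)
    (hadj : G.Adj v r) {m : ℕ} (hbr : IsBranch S r p (p^[m] v)) :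
    S.card ≤ maxKEndedOrder G k := by
  classical
  induction m generalizing r p v X with
  | zero =>
    by_contra! hlt
    exact h.not_isInner_of_lt hX hk hlt hvX (Or.inr hbr)
  | succ m ih =>
    by_contra! hlt
    have hr : ¬ IsBranch S r p r := fun hb ↦ h.not_isInner_of_lt hX hk hlt hrX (Or.inr hb)
    have hm : p^[m + 1] v ≠ r := fun e ↦ hr (e ▸ hbr)
    have hleaf : ∀ w, ¬ IsChild S r p v w := fun w hw ↦
      h.not_isInner_of_lt hX hk hlt hvX (Or.inl ⟨hvr, w, hw⟩)
    have hpr : p v ≠ r := h.iterate_ne_root_of_le (i := 1) (by omega) hm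
    have hT := h.swap hvr h.root_mem hadj fun i ↦ by rw [h.iterate_root]; exact hvr.symm
    by_cases hother : ∃ c, c ≠ v ∧ IsChild S r p (p v) c
    · obtain ⟨c, hcv, hc⟩ := hother
      refine hlt.not_ge (hT.card_le_maxKEndedOrder
        (h.coversEnds_swap_of_branch hX hv hvr hpr.symm hpr hc hcv) ?_)
      rw [Finset.card_erase_of_mem hrX]; omega
    have hpv : ∀ c, IsChild S r p (p v) c → c = v :=
      fun c hc ↦ by_contra fun hcv ↦ hother ⟨c, hcv, hc⟩
    have hchild : IsChild S r (Function.update p v r) r v := isChild_swap_self hv hvr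
    have hT' := hT.rerootChild hchild
    have hcov := hT.coversEnds_rerootChild (h.coversEnds_swap hX hv hvr hpr.symm) hchild
    have hne : p v ≠ v := (h.adj v hv hvr).ne'
    have hiter : ∀ i ≤ m, p^[i] (p v) ≠ r ∧ p^[i] (p v) ≠ v := by
      intro i hi
      have h1 : p^[i + 1] v ≠ r := h.iterate_ne_root_of_le (by omega) hm
      exact ⟨h1, (h.iterate_ne_of_lt hv (Nat.succ_pos i) h1).symm⟩
    have hq : ∀ s, s ≠ r → s ≠ v →
        Function.update (Function.update (Function.update p v r) r v) v v s = p s := by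
      intro s hsr hsv
      rw [Function.update_of_ne hsv, Function.update_of_ne hsr, Function.update_of_ne hsv]
    refine hlt.not_ge (ih hT' hcov ((card_insert_erase_le hrX _).trans hk) (h.parent_mem v hv) hne
      ?_ (Finset.mem_insert_self _ _) (h.adj v hv hvr).symm ?_)
    · exact Finset.mem_insert_of_mem (Finset.mem_erase.2 ⟨hvr, hvX⟩)
    · rw [iterate_congr_of_eq (f := p) fun i hi ↦ hq _ (hiter i hi.le).1 (hiter i hi.le).2]
      obtain ⟨a, b, hab, ha, hb⟩ := hbr
      have hcv : ∀ c, IsChild S r p (p^[m + 1] v) c → c ≠ v := by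
        rintro c hc rfl
        have e : p^[m + 1] c = p c := hc.2.2.symm
        rw [e] at ha hb
        exact hab ((hpv a ha).trans (hpv b hb).symm)
      exact ⟨a, b, hab, (ha.swap (hcv a ha)).rerootChild (hcv a ha),
        (hb.swap (hcv b hb)).rerootChild (hcv b hb)⟩

/-- A path whose ends are adjacent closes up to a cycle. -/
lemma card_le_of_adj_of_forall_unique (h : IsParentTree G S r p) (hk : 1 ≤ k) {v : V}
    (hv : v ∈ S) (hvr : v ≠ r) (hadj : G.Adj v r) (hleaf : ∀ w, ¬ IsChild S r p v w)
    (huniq : ∀ i, ¬ IsBranch S r p (p^[i] v)) : S.card ≤ maxKEndedOrder G k := by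
  classical
  have hchain : ∀ s ∈ S, ∃ i, p^[i] v = s := fun s hs ↦
    h.exists_iterate_eq_of_forall_unique hv hleaf
      (fun i a b ha hb ↦ by_contra fun hab ↦ huniq i ⟨a, b, hab, ha, hb⟩) hs
  have hinj : ∀ a ∈ S, ∀ b ∈ S, a ≠ r → b ≠ r → p a = p b → a = b := by
    intro a ha b hb har hbr hab
    by_contra hne
    obtain ⟨i, hi⟩ := hchain _ (h.parent_mem a ha)
    exact huniq i ⟨a, b, hne, ⟨ha, har, hi.symm⟩, ⟨hb, hbr, by rw [hi, hab]⟩⟩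
  let σ : V → V := Function.update p r v
  have hσr : σ r = v := Function.update_self ..
  have hσ : ∀ s, s ≠ r → σ s = p s := fun s hs ↦ Function.update_of_ne hs ..
  have hσS : ∀ s ∈ S, σ s ∈ S := fun s hs ↦ by
    by_cases hsr : s = r
    · rwa [hsr, hσr]
    · rw [hσ s hsr]; exact h.parent_mem s hs
  have hσadj : ∀ s ∈ S, G.Adj s (σ s) := fun s hs ↦ by
    by_cases hsr : s = r
    · rw [hsr, hσr]; exact hadj.symm
    · rw [hσ s hsr]; exact h.adj s hs hsr
  have hσinj : Set.InjOn σ S := by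
    intro a ha b hb hab
    by_cases har : a = r <;> by_cases hbr : b = r
    · rw [har, hbr]
    · rw [har, hσr, hσ b hbr] at hab
      exact absurd ⟨hb, hbr, hab.symm⟩ (hleaf b)
    · rw [hbr, hσr, hσ a har] at hab
      exact absurd ⟨ha, har, hab⟩ (hleaf a)
    · rw [hσ a har, hσ b hbr] at hab
      exact hinj a ha b hb har hbr hab
  have hσsurj := Finset.surjOn_of_injOn_of_card_le σ hσS hσinj le_rfl
  let H : G.Subgraph :=
    { verts := ↑S
      Adj := fun a b ↦ a ∈ S ∧ b ∈ S ∧ (σ a = b ∨ σ b = a)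
      adj_sub := by
        rintro a b ⟨ha, hb, rfl | rfl⟩
        · exact hσadj a ha
        · exact (hσadj b hb).symm
      edge_vert := fun hab ↦ hab.1
      symm := ⟨fun a b hab ↦ ⟨hab.2.1, hab.1, hab.2.2.symm⟩⟩ }
  have hcard : H.verts.ncard = S.card := Set.ncard_coe_finset S
  rw [← hcard]
  refine card_verts_le_maxKEndedOrder (Or.inr ⟨hk, ?_, ?_⟩)
  · exact h.subgraph_connected rfl fun s hs hsr ↦
      ⟨hs, h.parent_mem s hs, Or.inl (hσ s hsr)⟩
  by_cases hpv : p v = r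
  · left
    have hsub : S ⊆ {v, r} := by
      intro s hs
      obtain ⟨i, rfl⟩ := hchain s hs
      cases i with
      | zero => simp
      | succ i => simp [hpv, h.iterate_root]
    rw [hcard]
    exact (Finset.card_le_card hsub).trans Finset.card_le_two
  right
  intro s hs
  obtain ⟨t, ht, hts⟩ := hσsurj hs
  have hnbr : H.neighborSet s = {σ s, t} := by
    ext w
    constructor
    · rintro ⟨-, hw, e | e⟩
      · exact Or.inl e.symm
      · exact Or.inr (hσinj hw ht (e.trans hts.symm))
    · rintro (rfl | rfl)
      · exact ⟨hs, hσS s hs, Or.inl rfl⟩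
      · exact ⟨hs, ht, Or.inr hts⟩
  rw [hnbr, Set.ncard_pair]
  rintro rfl
  obtain ⟨d, hd⟩ := h.rank
  by_cases hsr : s = r
  · rw [hsr, hσr, hσ v hvr] at hts
    exact hpv hts
  rw [hσ s hsr] at hts
  by_cases hpsr : p s = r
  · rw [hpsr, hσr] at hts
    exact hpv (hts ▸ hpsr)
  rw [hσ _ hpsr] at hts
  have h1 := hd s hs hsr
  have h2 := hd _ (h.parent_mem s hs) hpsr
  rw [hts] at h2
  omega

/-- If two end-vertices are adjacent in `G`, the number of end-vertices can be lowered without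
losing vertices. -/
lemma card_le_of_adj (h : IsParentTree G S r p) (hX : CoversEnds S r p X)
    (hk : 1 ≤ k) (hXk : X.card ≤ k + 1) {u v : V} (hu : u ∈ S) (hv : v ∈ S) (huX : u ∈ X)
    (hvX : v ∈ X) (hadj : G.Adj v u) : S.card ≤ maxKEndedOrder G k := by
  classical
  obtain ⟨q, hq, hqX⟩ := h.exists_reroot hX hu
  by_cases hbr : ∃ i, IsBranch S u q (q^[i] v)
  · obtain ⟨m, hm⟩ := hbr
    exact hq.card_le_of_adj_of_isBranch hqX hXk hv hadj.ne huX hvX hadj hm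
  · by_contra! hlt
    refine hlt.not_ge (hq.card_le_of_adj_of_forall_unique hk hv hadj.ne hadj (fun w hw ↦ ?_)
      (not_exists.1 hbr))
    exact hq.not_isInner_of_lt hqX hXk hlt hvX (Or.inl ⟨hadj.ne, w, hw⟩)

end IsParentTree

/-- A tree with `k + 1` end-vertices, rooted at one of them, whose order exceeds that of every
`k`-ended tree by at least `l`. -/
structure IsExtremalTree (G : SimpleGraph V) (S : Finset V) (x : V) (p : V → V) (X : Finset V)
    (k l : ℕ) : Prop where
  tree : IsParentTree G S x p
  covers : CoversEnds S x p X
  subset : X ⊆ S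
  root_mem : x ∈ X
  card_eq : X.card = k + 1
  one_le_k : 1 ≤ k
  one_le_l : 1 ≤ l
  add_le : maxKEndedOrder G k + l ≤ S.card

/-- `n` is the distance from `z` to its first ancestor with at least two children. -/
def IsLegLength (S : Finset V) (r : V) (p : V → V) (z : V) (n : ℕ) : Prop :=
  IsBranch S r p (p^[n] z) ∧ ∀ i < n, ¬ IsBranch S r p (p^[i] z)

namespace IsExtremalTree

variable {G : SimpleGraph V} {S X : Finset V} {x : V} {p : V → V} {k l : ℕ}

lemma lt (h : IsExtremalTree G S x p X k l) : maxKEndedOrder G k < S.card := by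
  have := h.add_le
  have := h.one_le_l
  omega

variable [Finite V]

lemma not_isChild (h : IsExtremalTree G S x p X k l) {v : V} (hv : v ∈ X) (hvx : v ≠ x) (w : V) :
    ¬ IsChild S x p v w := fun hw ↦
  h.tree.not_isInner_of_lt h.covers h.card_eq.le h.lt hv (Or.inl ⟨hvx, w, hw⟩)

lemma not_isBranch_root (h : IsExtremalTree G S x p X k l) : ¬ IsBranch S x p x := fun hb ↦
  h.tree.not_isInner_of_lt h.covers h.card_eq.le h.lt h.root_mem (Or.inr hb)

lemma not_adj (h : IsExtremalTree G S x p X k l) {u v : V} (hu : u ∈ X) (hv : v ∈ X) :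
    ¬ G.Adj u v := fun hadj ↦
  h.lt.not_ge (h.tree.card_le_of_adj h.covers h.one_le_k h.card_eq.le (h.subset hv) (h.subset hu)
    hv hu hadj)

/-- End-vertices have no neighbours outside a largest tree. -/
lemma mem_of_adj (h : IsExtremalTree G S x p X k l) (hmax : S.card = maxKEndedOrder G (k + 1))
    {u w : V} (hu : u ∈ X) (hadj : G.Adj u w) : w ∈ S := by
  classical
  by_contra hw
  have huS := h.subset hu
  have hq : ∀ s ∈ S, Function.update p w u s = p s := fun s hs ↦
    Function.update_of_ne (by rintro rfl; exact hw hs) ..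
  have hwx : w ≠ x := by rintro rfl; exact hw h.tree.root_mem
  have hmem : ∀ {s}, s ∈ insert w S ↔ s = w ∨ s ∈ S := Finset.mem_insert
  have hT : IsParentTree G (insert w S) x (Function.update p w u) := by
    refine ⟨hmem.2 (Or.inr h.tree.root_mem), ?_, ?_, ?_, ?_⟩
    · rw [hq x h.tree.root_mem, h.tree.parent_root]
    · intro s hs
      rcases hmem.1 hs with rfl | hs
      · rw [Function.update_self]; exact hmem.2 (Or.inr huS)
      · rw [hq s hs]; exact hmem.2 (Or.inr (h.tree.parent_mem s hs))
    · intro s hs hsx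
      rcases hmem.1 hs with rfl | hs
      · rw [Function.update_self]; exact hadj.symm
      · rw [hq s hs]; exact h.tree.adj s hs hsx
    · obtain ⟨d, hd⟩ := h.tree.rank
      refine ⟨fun s ↦ if s = w then d u + 1 else d s, fun s hs hsx ↦ ?_⟩
      have hne : ∀ t ∈ S, t ≠ w := by rintro t ht rfl; exact hw ht
      rcases hmem.1 hs with rfl | hs
      · simp [hadj.ne]
      · simp only [hq s hs, if_neg (hne s hs), if_neg (hne _ (h.tree.parent_mem s hs))]
        exact hd s hs hsx
  have hchild : ∀ {s c}, IsChild S x p s c →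
      IsChild (insert w S) x (Function.update p w u) s c := fun {s c} hc ↦
    ⟨hmem.2 (Or.inr hc.1), hc.2.1, by rw [hq c hc.1, hc.2.2]⟩
  have hwu : IsChild (insert w S) x (Function.update p w u) u w :=
    ⟨hmem.2 (Or.inl rfl), hwx, Function.update_self ..⟩
  have hcov : CoversEnds (insert w S) x (Function.update p w u) (insert w (X.erase u)) := by
    intro s hs hsX
    rw [Finset.mem_insert, Finset.mem_erase, not_or] at hsX
    have hsS : s ∈ S := (hmem.1 hs).resolve_left hsX.1
    by_cases hsu : s = u
    · subst hsu
      by_cases hsx : s = x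
      · subst hsx
        obtain ⟨v, hv, hvx⟩ := Finset.exists_mem_ne
          (by rw [h.card_eq]; have := h.one_le_k; omega) s
        obtain ⟨c, hc⟩ := h.tree.exists_child_root (h.subset hv) hvx
        refine Or.inr ⟨c, w, ?_, hchild hc, hwu⟩
        rintro rfl
        exact hw hc.1
      · exact Or.inl ⟨hsx, w, hwu⟩
    · rcases h.covers s hsS fun hsX' ↦ hsX.2 ⟨hsu, hsX'⟩ with ⟨hsx, c, hc⟩ | ⟨a, b, hab, ha, hb⟩
      · exact Or.inl ⟨hsx, c, hchild hc⟩
      · exact Or.inr ⟨a, b, hab, hchild ha, hchild hb⟩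
  have := hT.card_le_maxKEndedOrder hcov ((card_insert_erase_le hu w).trans h.card_eq.le)
  rw [Finset.card_insert_of_notMem hw] at this
  omega

/-- The parent of a neighbour of the root has no other child. -/
lemma eq_of_isChild_parent (h : IsExtremalTree G S x p X k l) {w c : V} (hw : w ∈ S)
    (hadj : G.Adj x w) (hc : IsChild S x p (p w) c) : c = w := by
  classical
  by_contra hcw
  by_cases hpw : p w = x
  · exact h.not_isBranch_root ⟨c, w, hcw, hpw ▸ hc, hw, hadj.ne', hpw⟩
  have hT := h.tree.swap hadj.ne' h.tree.root_mem hadj.symm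
    fun i ↦ by rw [h.tree.iterate_root]; exact hadj.ne
  refine h.lt.not_ge (hT.card_le_maxKEndedOrder (h.tree.coversEnds_swap_of_branch h.covers hw
    hadj.ne' (Ne.symm hpw) hpw hc hcw) ?_)
  rw [Finset.card_erase_of_mem h.root_mem, h.card_eq]
  omega

/-- The parent of a neighbour of the root is not adjacent to any other end-vertex. -/
lemma not_adj_parent (h : IsExtremalTree G S x p X k l) {w y : V} (hw : w ∈ S)
    (hadj : G.Adj x w) (hy : y ∈ X) (hyx : y ≠ x) : ¬ G.Adj y (p w) := by
  classical
  intro hyw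
  by_cases hpw : p w = x
  · exact h.not_adj hy h.root_mem (hpw ▸ hyw)
  have hT := h.tree.swap hadj.ne' h.tree.root_mem hadj.symm
    fun i ↦ by rw [h.tree.iterate_root]; exact hadj.ne
  exact h.lt.not_ge (hT.card_le_of_adj
    (h.tree.coversEnds_swap h.covers hw hadj.ne' (Ne.symm hpw)) h.one_le_k
    ((card_insert_erase_le h.root_mem _).trans h.card_eq.le) (h.tree.parent_mem w hw)
    (h.subset hy) (Finset.mem_insert_self _ _)
    (Finset.mem_insert_of_mem (Finset.mem_erase.2 ⟨hyx, hy⟩)) hyw)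

lemma exists_isLegLength (h : IsExtremalTree G S x p X k l) {y z : V} (hy : y ∈ X) (hyx : y ≠ x)
    (hz : z ∈ X) (hzx : z ≠ x) (hzy : z ≠ y) : ∃ n, IsLegLength S x p z n := by
  classical
  suffices hex : ∃ n, IsBranch S x p (p^[n] z) from
    ⟨Nat.find hex, Nat.find_spec hex, fun i hi ↦ Nat.find_min hex hi⟩
  by_contra! hno
  obtain ⟨i, hi⟩ := h.tree.exists_iterate_eq_of_forall_unique (h.subset hz) (h.not_isChild hz hzx)
    (fun i a b ha hb ↦ by_contra fun hab ↦ hno i ⟨a, b, hab, ha, hb⟩) (h.subset hy)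
  cases i with
  | zero => exact hzy hi
  | succ i =>
    refine h.not_isChild hy hyx _ (hi ▸ h.tree.isChild_iterate (h.subset hz) ?_)
    exact h.tree.iterate_ne_root_of_le (Nat.le_succ i) (hi ▸ hyx)

section Leg

variable {z : V} {n : ℕ}

lemma iterate_ne_root (h : IsExtremalTree G S x p X k l) (hn : IsLegLength S x p z n) {i : ℕ}
    (hi : i ≤ n) : p^[i] z ≠ x :=
  h.tree.iterate_ne_root_of_le hi fun e ↦ h.not_isBranch_root (e ▸ hn.1)

lemma exists_eq_iterate_of_isChild (h : IsExtremalTree G S x p X k l) (hz : z ∈ X) (hzx : z ≠ x)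
    (hn : IsLegLength S x p z n) {i : ℕ} (hi : i < n) {s : V}
    (hs : IsChild S x p (p^[i] z) s) : ∃ m, i = m + 1 ∧ s = p^[m] z := by
  cases i with
  | zero => exact absurd hs (h.not_isChild hz hzx s)
  | succ m =>
    refine ⟨m, rfl, by_contra fun hne ↦ hn.2 _ hi ⟨s, p^[m] z, hne, hs, ?_⟩⟩
    exact h.tree.isChild_iterate (h.subset hz) (h.iterate_ne_root hn (by omega))

lemma exists_eq_iterate_of_iterate_eq (h : IsExtremalTree G S x p X k l) (hz : z ∈ X)
    (hzx : z ≠ x) (hn : IsLegLength S x p z n) {i j : ℕ} (hi : i < n) {s : V} (hs : s ∈ S)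
    (hj : p^[j] s = p^[i] z) : ∃ m ≤ i, s = p^[m] z := by
  induction j generalizing s with
  | zero => exact ⟨i, le_rfl, hj⟩
  | succ j ih =>
    obtain ⟨m, hm, hms⟩ := ih (h.tree.parent_mem s hs) hj
    have hsx : s ≠ x := by
      rintro rfl
      rw [h.tree.parent_root] at hms
      exact h.iterate_ne_root hn (hm.trans hi.le) hms.symm
    obtain ⟨m', rfl, hs'⟩ :=
      h.exists_eq_iterate_of_isChild hz hzx hn (hm.trans_lt hi) ⟨hs, hsx, hms⟩
    exact ⟨m', by omega, hs'⟩

/-- The only end-vertex below a vertex of the leg of `z` is `z` itself. -/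
lemma eq_of_iterate_eq (h : IsExtremalTree G S x p X k l) (hz : z ∈ X) (hzx : z ≠ x)
    (hn : IsLegLength S x p z n) {i j : ℕ} (hi : i < n) {s : V} (hs : s ∈ X)
    (hj : p^[j] s = p^[i] z) : s = z := by
  obtain ⟨m, hm, hms⟩ := h.exists_eq_iterate_of_iterate_eq hz hzx hn hi (h.subset hs) hj
  cases m with
  | zero => exact hms
  | succ m =>
    have hsx : s ≠ x := by
      rintro rfl
      exact h.iterate_ne_root hn (hm.trans hi.le) hms.symm
    refine absurd (h.tree.isChild_iterate (h.subset hz) (i := m) ?_) (hms ▸ h.not_isChild hs hsx _)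
    exact h.iterate_ne_root hn (by omega)

lemma le_legLength (h : IsExtremalTree G S x p X k l) (hz : z ∈ X) (hzx : z ≠ x)
    (hn : IsLegLength S x p z n) : l ≤ n := by
  have := h.tree.card_le_add_of_isBranch h.covers h.card_eq.le (h.subset hz) hz
    (h.not_isChild hz hzx) (h.iterate_ne_root hn le_rfl) hn.1
  have := h.add_le
  omega

/-- The last `l` vertices of a leg are not adjacent to the other end-vertices. -/
lemma add_lt_legLength_of_adj (h : IsExtremalTree G S x p X k l) (hz : z ∈ X) (hzx : z ≠ x)
    (hn : IsLegLength S x p z n) {u : V} (hu : u ∈ X) (huz : u ≠ z) {i : ℕ} (hi : i < n)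
    (hadj : G.Adj (p^[i] z) u) : i + l < n := by
  classical
  have hzS := h.subset hz
  have hmem := h.tree.iterate_mem hzS i
  have hne := h.iterate_ne_root hn hi.le
  have hsucc : p (p^[i] z) = p^[i + 1] z := (Function.iterate_succ_apply' p i z).symm
  have hpne : p (p^[i] z) ≠ x := hsucc ▸ h.iterate_ne_root hn hi
  have hchild : IsChild S x p (p (p^[i] z)) (p^[i] z) := ⟨hmem, hne, rfl⟩
  have hup : u ≠ p (p^[i] z) := by
    intro e
    exact h.not_isChild hu (e ▸ hpne) _ (e ▸ hchild)
  have hT := h.tree.swap hne (h.subset hu) hadj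
    fun j hj ↦ huz (h.eq_of_iterate_eq hz hzx hn hi hu hj)
  have hadd := h.add_le
  have hl := h.one_le_l
  rcases Nat.lt_or_ge (i + 1) n with hin | hin
  · have hcov := h.tree.coversEnds_swap h.covers hmem hne hup
    have hiter : (Function.update p (p^[i] z) u)^[n - (i + 1)] (p (p^[i] z)) = p^[n] z := by
      rw [iterate_congr_of_eq (f := p), hsucc, ← Function.iterate_add_apply]
      · congr 2; omega
      · intro j hj
        rw [hsucc, ← Function.iterate_add_apply]
        exact Function.update_of_ne
          (h.tree.iterate_ne_of_lt hzS (by omega) (h.iterate_ne_root hn (by omega))).symm ..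
    have hnin : p^[n] z ≠ p (p^[i] z) := by
      rw [hsucc]
      exact (h.tree.iterate_ne_of_lt hzS hin (h.iterate_ne_root hn le_rfl)).symm
    have := hT.card_le_add_of_isBranch (k := k) (m := n - (i + 1)) hcov
      ((card_insert_erase_le hu _).trans h.card_eq.le) (h.tree.parent_mem _ hmem)
      (Finset.mem_insert_self _ _) ?_ (hiter ▸ h.iterate_ne_root hn le_rfl) ?_
    · omega
    · rintro w ⟨hw, hwx, hwp⟩
      by_cases hwz : w = p^[i] z
      · rw [hwz, Function.update_self] at hwp
        exact hup hwp
      · rw [Function.update_of_ne hwz] at hwp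
        exact hn.2 (i + 1) hin (hsucc ▸ ⟨w, p^[i] z, hwz, ⟨hw, hwx, hwp⟩, hchild⟩)
    · rw [hiter]
      obtain ⟨a, b, hab, ha, hb⟩ := hn.1
      have hcne : ∀ c, IsChild S x p (p^[n] z) c → c ≠ p^[i] z := by
        rintro c hc rfl
        exact hnin hc.2.2.symm
      exact ⟨a, b, hab, ha.swap (hcne a ha), hb.swap (hcne b hb)⟩
  · have hin' : i + 1 = n := by omega
    subst hin'
    obtain ⟨c, hcw, hc⟩ := hn.1.exists_child_ne (p^[i] z)
    have := hT.card_le_maxKEndedOrder (k := k) (h.tree.coversEnds_swap_of_branch h.covers hmem hne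
      hup hpne (hsucc ▸ hc) hcw) (by rw [Finset.card_erase_of_mem hu, h.card_eq]; omega)
    omega

end Leg

/-- Every end-vertex `z` other than `x` and `y` provides `l` vertices of its leg which are neither
neighbours of `y` nor parents of neighbours of `x`. -/
lemma exists_leg_subset (h : IsExtremalTree G S x p X k l) {y z : V} (hy : y ∈ X) (hyx : y ≠ x)
    (hz : z ∈ X) (hzx : z ≠ x) (hzy : z ≠ y) :
    ∃ B ⊆ S, B.card = l ∧ (∀ b ∈ B, ¬ G.Adj y b) ∧
      (∀ w ∈ S, G.Adj x w → p w ∉ B) ∧ (∀ s ∈ X, ∀ j, p^[j] s ∈ B → s = z) ∧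
      ∀ b ∈ B, ∃ i, p^[i] z = b := by
  classical
  obtain ⟨n, hn⟩ := h.exists_isLegLength hy hyx hz hzx hzy
  have hzS := h.subset hz
  have hl := h.one_le_l
  have hln := h.le_legLength hz hzx hn
  let I : Finset ℕ := insert 0 (Finset.Ico (n + 1 - l) n)
  have hI : ∀ {i}, i ∈ I ↔ i = 0 ∨ n + 1 - l ≤ i ∧ i < n := by simp [I]
  have hIn : ∀ {i}, i ∈ I → i < n := fun hi ↦ by rcases hI.1 hi with rfl | hi <;> omega
  refine ⟨I.image fun i ↦ p^[i] z, ?_, ?_, ?_, ?_, ?_, ?_⟩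
  · intro b hb
    obtain ⟨i, -, rfl⟩ := Finset.mem_image.1 hb
    exact h.tree.iterate_mem hzS i
  · rw [Finset.card_image_of_injOn, Finset.card_insert_of_notMem, Nat.card_Ico]
    · omega
    · simp only [Finset.mem_Ico]; omega
    · intro i hi j hj hij
      have hin := h.iterate_ne_root hn (hIn hi).le
      have hjn := h.iterate_ne_root hn (hIn hj).le
      rcases lt_trichotomy i j with hlt | heq | hlt
      · exact absurd hij (h.tree.iterate_ne_of_lt hzS hlt hjn)
      · exact heq
      · exact absurd hij.symm (h.tree.iterate_ne_of_lt hzS hlt hin)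
  · intro b hb hadj
    obtain ⟨i, hi, rfl⟩ := Finset.mem_image.1 hb
    rcases hI.1 hi with rfl | hi'
    · exact h.not_adj hy hz hadj
    · have := h.add_lt_legLength_of_adj hz hzx hn hy hzy.symm hi'.2 hadj.symm
      omega
  · intro w hw hadj hb
    obtain ⟨i, hi, hiw⟩ := Finset.mem_image.1 hb
    obtain ⟨m, rfl, rfl⟩ :=
      h.exists_eq_iterate_of_isChild hz hzx hn (hIn hi) ⟨hw, hadj.ne', hiw.symm⟩
    have hmn := hIn hi
    have := h.add_lt_legLength_of_adj hz hzx hn h.root_mem hzx.symm (by omega) hadj.symm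
    rcases hI.1 hi with hi' | hi' <;> omega
  · intro s hs j hb
    obtain ⟨i, hi, hiw⟩ := Finset.mem_image.1 hb
    exact h.eq_of_iterate_eq hz hzx hn (hIn hi) hs hiw.symm
  · intro b hb
    obtain ⟨i, -, hi⟩ := Finset.mem_image.1 hb
    exact ⟨i, hi⟩

end IsExtremalTree

/-- Two end-vertices of a largest `(k + 1)`-ended tree have small degree sum if it is much larger
than every `k`-ended tree. -/
lemma IsExtremalTree.degree_add_degree_lt [Fintype V] {G : SimpleGraph V} [DecidableRel G.Adj]
    {S X : Finset V} {x y : V} {p : V → V} {k l : ℕ} (h : IsExtremalTree G S x p X k l)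
    (hmax : S.card = maxKEndedOrder G (k + 1)) (hy : y ∈ X) (hyx : y ≠ x) :
    G.degree x + G.degree y + l * (k - 1) < S.card := by
  classical
  have hleg : ∀ z : V, ∃ B ⊆ S, z ∈ (X.erase x).erase y →
      B.card = l ∧ (∀ b ∈ B, ¬ G.Adj y b) ∧
      (∀ w ∈ S, G.Adj x w → p w ∉ B) ∧ (∀ s ∈ X, ∀ j, p^[j] s ∈ B → s = z) ∧
      ∀ b ∈ B, ∃ i, p^[i] z = b := by
    intro z
    by_cases hz : z ∈ (X.erase x).erase y
    · obtain ⟨hzy, hz'⟩ := Finset.mem_erase.1 hz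
      obtain ⟨hzx, hzX⟩ := Finset.mem_erase.1 hz'
      obtain ⟨B, hB, hB'⟩ := h.exists_leg_subset hy hyx hzX hzx hzy
      exact ⟨B, hB, fun _ ↦ hB'⟩
    · exact ⟨∅, Finset.empty_subset _, fun hz' ↦ absurd hz' hz⟩
  choose B hBS hB using hleg
  have hx : ∀ w ∈ G.neighborFinset x, w ∈ S ∧ G.Adj x w := fun w hw ↦
    have hw' := (G.mem_neighborFinset x w).1 hw
    ⟨h.mem_of_adj hmax h.root_mem hw', hw'⟩
  have hcardA : ((G.neighborFinset x).image p).card = G.degree x := by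
    rw [Finset.card_image_of_injOn, card_neighborFinset_eq_degree]
    intro a ha b hb hab
    exact h.eq_of_isChild_parent (hx b hb).1 (hx b hb).2
      ⟨(hx a ha).1, (hx a ha).2.ne', hab⟩
  have hcardB : (((X.erase x).erase y).biUnion B).card = l * (k - 1) := by
    rw [Finset.card_biUnion, Finset.sum_congr rfl fun z hz ↦ (hB z hz).1, Finset.sum_const,
      Finset.card_erase_of_mem (Finset.mem_erase.2 ⟨hyx, hy⟩),
      Finset.card_erase_of_mem h.root_mem, h.card_eq, smul_eq_mul, mul_comm]
    · simp
    · intro z hz z' hz' hne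
      rw [Function.onFun, Finset.disjoint_left]
      intro b hb hb'
      obtain ⟨i, rfl⟩ := (hB z hz).2.2.2.2 b hb
      exact hne ((hB z' hz').2.2.2.1 z (Finset.mem_of_mem_erase (Finset.mem_of_mem_erase hz)) i hb')
  have hAN : Disjoint ((G.neighborFinset x).image p) (G.neighborFinset y) := by
    rw [Finset.disjoint_left]
    intro b hb hb'
    obtain ⟨w, hw, rfl⟩ := Finset.mem_image.1 hb
    exact h.not_adj_parent (hx w hw).1 (hx w hw).2 hy hyx ((G.mem_neighborFinset y _).1 hb')
  have hABN : Disjoint ((G.neighborFinset x).image p ∪ G.neighborFinset y)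
      (((X.erase x).erase y).biUnion B) := by
    rw [Finset.disjoint_right]
    intro b hb hb'
    obtain ⟨z, hz, hbz⟩ := Finset.mem_biUnion.1 hb
    rcases Finset.mem_union.1 hb' with hb' | hb'
    · obtain ⟨w, hw, rfl⟩ := Finset.mem_image.1 hb'
      exact (hB z hz).2.2.1 w (hx w hw).1 (hx w hw).2 hbz
    · exact (hB z hz).2.1 b hbz ((G.mem_neighborFinset y _).1 hb')
  rw [← hcardA, ← hcardB, ← card_neighborFinset_eq_degree, ← Finset.card_union_of_disjoint hAN,
    ← Finset.card_union_of_disjoint hABN]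
  refine Finset.card_lt_card ((Finset.ssubset_iff_of_subset ?_).2 ⟨y, h.subset hy, ?_⟩)
  · refine Finset.union_subset (Finset.union_subset ?_ ?_) ?_
    · intro b hb
      obtain ⟨w, hw, rfl⟩ := Finset.mem_image.1 hb
      exact h.tree.parent_mem w (hx w hw).1
    · exact fun w hw ↦ h.mem_of_adj hmax hy ((G.mem_neighborFinset y w).1 hw)
    · exact Finset.biUnion_subset.2 fun z _ ↦ hBS z
  · intro hmem
    rcases Finset.mem_union.1 hmem with hmem | hmem
    · rcases Finset.mem_union.1 hmem with hmem | hmem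
      · obtain ⟨w, hw, hwy⟩ := Finset.mem_image.1 hmem
        exact h.not_isChild hy hyx w ⟨(hx w hw).1, (hx w hw).2.ne', hwy⟩
      · exact G.irrefl ((G.mem_neighborFinset y y).1 hmem)
    · obtain ⟨z, hz, hyz⟩ := Finset.mem_biUnion.1 hmem
      exact Finset.ne_of_mem_erase hz ((hB z hz).2.2.2.1 y hy 0 hyz).symm

lemma exists_isKEndedTree_card_eq [Finite V] [Nonempty V] (G : SimpleGraph V) {k : ℕ}
    (hk : 1 ≤ k) : ∃ H : G.Subgraph, IsKEndedTree G k H ∧ H.verts.ncard = maxKEndedOrder G k := by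
  refine Nat.sSup_mem
    (s := {n | ∃ H : G.Subgraph, IsKEndedTree G k H ∧ H.verts.ncard = n}) ?_ ⟨Nat.card V, ?_⟩
  · obtain ⟨v⟩ := ‹Nonempty V›
    refine ⟨_, G.singletonSubgraph v, Or.inr ⟨hk, Subgraph.singletonSubgraph_connected, Or.inl ?_⟩,
      rfl⟩
    simp
  · rintro n ⟨H, -, rfl⟩
    exact Set.ncard_le_card _

lemma minDegreeSum_two_le [Fintype V] (G : SimpleGraph V) [DecidableRel G.Adj] {x y : V}
    (hne : x ≠ y) (hadj : ¬ G.Adj x y) :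
    minDegreeSum G 2 ≤ ((G.degree x + G.degree y : ℕ) : ℕ∞) := by
  classical
  have hind : IsIndSet G ↑({x, y} : Finset V) := by
    simp only [IsIndSet, Finset.coe_pair, Set.mem_insert_iff, Set.mem_singleton_iff]
    rintro u (rfl | rfl) v (rfl | rfl)
    · exact G.irrefl
    · exact hadj
    · exact fun h ↦ hadj h.symm
    · exact G.irrefl
  refine (iInf₂_le {x, y} ⟨Finset.card_pair hne, hind⟩).trans ?_
  rw [Finset.sum_pair hne]
  push_cast
  exact le_rfl

/-- **Corollary 5.** If `G` is connected and `σ_2 ≥ t_{k+1} - λ(k - 1)` for some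
positive integers `λ, k`, then `t_k ≥ t_{k+1} - λ + 1`. -/
theorem corollary5 [Fintype V] (G : SimpleGraph V) [DecidableRel G.Adj]
    (hG : G.Connected) (k l : ℕ) (hk : 1 ≤ k) (hl : 1 ≤ l)
    (h : (maxKEndedOrder G (k + 1) : ℕ∞) ≤
      minDegreeSum G 2 + ((l * (k - 1) : ℕ) : ℕ∞)) :
    maxKEndedOrder G k + l ≥ maxKEndedOrder G (k + 1) + 1 := by
  classical
  by_contra! hcon
  have hlt : maxKEndedOrder G k < maxKEndedOrder G (k + 1) := by omega
  have := hG.nonempty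
  obtain ⟨H, hH, hHcard⟩ := exists_isKEndedTree_card_eq G (Nat.le_add_left 1 k)
  have hnot : ¬ IsKEndedTree G k H := fun hH' ↦
    hlt.not_ge (hHcard ▸ card_verts_le_maxKEndedOrder hH')
  obtain ⟨hT, hends⟩ : H.coe.IsTree ∧ endVertexCount H ≤ k + 1 :=
    hH.resolve_right fun hc ↦ hnot (Or.inr ⟨hk, hc.2⟩)
  have hendsk : ¬ endVertexCount H ≤ k := fun hle ↦ hnot (Or.inl ⟨hT, hle⟩)
  let S : Finset V := H.verts.toFinset
  have hS : (S : Set V) = H.verts := Set.coe_toFinset _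
  let X : Finset V := {v : V | v ∈ H.verts ∧ (H.neighborSet v).ncard = 1}.toFinset
  have hX : ∀ {v}, v ∈ X ↔ v ∈ H.verts ∧ (H.neighborSet v).ncard = 1 := by simp [X]
  have hXcard : X.card = k + 1 := by
    rw [← Set.ncard_eq_toFinset_card']
    exact le_antisymm hends (by unfold endVertexCount at hendsk; omega)
  have hScard : S.card = maxKEndedOrder G (k + 1) := by
    rw [← Set.ncard_coe_finset, hS, hHcard]
  obtain ⟨x, hx, y, hy, hxy⟩ := Finset.one_lt_card.1 (by omega : 1 < X.card)
  have hXS : X ⊆ S := fun v hv ↦ by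
    rw [← Finset.mem_coe, hS]
    exact (hX.1 hv).1
  obtain ⟨p, hp, hpadj, hpH⟩ := exists_isParentTree_of_isTree hT hS (hXS hx)
  have hext : IsExtremalTree G S x p X k l := by
    refine ⟨hp, fun v hv hvX ↦ ?_, hXS, hx, hXcard, hk, hl, by omega⟩
    have hvH : v ∈ H.verts := by rwa [← hS]
    have hne1 : (H.neighborSet v).ncard ≠ 1 := fun e ↦ hvX (hX.2 ⟨hvH, e⟩)
    have hvx : v ≠ x := by rintro rfl; exact hvX hx
    by_contra hinner
    refine hne1 (Set.ncard_eq_one.2 ⟨p v, Set.eq_singleton_iff_unique_mem.2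
      ⟨hpadj v hv hvx, fun a ha ↦ ?_⟩⟩)
    rcases hpH v a ha with hc | hc
    · exact absurd (Or.inl ⟨hvx, a, hc⟩) hinner
    · exact hc.2.2.symm
  have hdeg := hext.degree_add_degree_lt hScard hy hxy.symm
  have hσ := h.trans (add_le_add_left (minDegreeSum_two_le G hxy (hext.not_adj hx hy)) _)
  rw [← Nat.cast_add, Nat.cast_le] at hσ
  omega
end

section
/- Let G be a connected graph of order n with σ_2 ≥ n − k + 1 for some positive integer k. Then G has a spanning k-ended tree. (Corollary 7) -/
open SimpleGraph

variable {V : Type*}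

namespace SimpleGraph

/-- The list `l` is the vertex sequence of a path of `G`. -/
def IsPathList (G : SimpleGraph V) (l : List V) : Prop :=
  l.IsChain G.Adj ∧ l.Nodup

/-- The last vertex of `l` is adjacent to the first one. -/
def IsClosedList (G : SimpleGraph V) (l : List V) : Prop :=
  ∀ x ∈ l.getLast?, ∀ y ∈ l.head?, G.Adj x y

theorem exists_longest_isPathList [Finite V] (G : SimpleGraph V) :
    ∃ l, G.IsPathList l ∧ ∀ l', G.IsPathList l' → l'.length ≤ l.length := by
  classical
  have := Fintype.ofFinite V
  have : Finite {l : List V // G.IsPathList l} :=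
    Finite.of_injective
      (fun l => (⟨l.1, l.2.2⟩ : {l : List V // l.Nodup}))
      (fun a b hab => Subtype.ext (Subtype.mk.inj hab))
  have : Nonempty {l : List V // G.IsPathList l} := ⟨⟨[], by simp [IsPathList]⟩⟩
  obtain ⟨l, hl⟩ := Finite.exists_max (fun l : {l : List V // G.IsPathList l} => l.1.length)
  exact ⟨l.1, l.2, fun l' h' => hl ⟨l', h'⟩⟩

theorem IsPathList.reverse {G : SimpleGraph V} {l : List V} (h : G.IsPathList l) :
    G.IsPathList l.reverse := by
  refine ⟨?_, List.nodup_reverse.2 h.2⟩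
  rw [List.isChain_reverse]
  exact h.1.imp fun a b hab => hab.symm

/-- A path whose vertices carry a closed path, and which misses a vertex of a connected graph,
is not longest. -/
theorem IsPathList.exists_length_lt {G : SimpleGraph V} (hG : G.Connected) {l : List V}
    (hl : G.IsPathList l) (hc : G.IsClosedList l) (hne : l ≠ []) {w : V} (hw : w ∉ l) :
    ∃ l', G.IsPathList l' ∧ l.length < l'.length := by
  obtain ⟨u, hu⟩ := List.exists_mem_of_ne_nil l hne
  obtain ⟨p⟩ := hG.preconnected u w
  obtain ⟨d, -, hd1, hd2⟩ := p.exists_boundary_dart {x | x ∈ l} hu hw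
  obtain ⟨a, b, hab⟩ := List.append_of_mem (show d.fst ∈ l from hd1)
  obtain ⟨hch, hnd⟩ := hl
  replace hd2 : d.snd ∉ l := hd2
  have hadj := d.adj.symm
  subst hab
  refine ⟨d.snd :: d.fst :: (b ++ a), ⟨?_, ?_⟩, by simp; omega⟩
  · rw [List.isChain_append] at hch
    refine List.IsChain.cons_cons hadj ?_
    rw [← List.cons_append, List.isChain_append]
    refine ⟨hch.2.1, hch.1, fun x hx y hy => hc x ?_ y ?_⟩
    · rw [List.getLast?_append]; simp [Option.mem_def.1 hx]
    · rw [List.head?_append]; simp [Option.mem_def.1 hy]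
  · have : (d.fst :: (b ++ a)).Perm (a ++ d.fst :: b) := by
      simpa using (List.perm_append_comm (l₁ := d.fst :: b) (l₂ := a))
    rw [List.nodup_cons, this.mem_iff, this.nodup_iff]
    exact ⟨hd2, hnd⟩

/-- Ore's crossing argument. -/
theorem IsPathList.exists_closed_perm [Fintype V] {G : SimpleGraph V} [DecidableRel G.Adj]
    {l : List V} (hl : G.IsPathList l)
    (hmax : ∀ l', G.IsPathList l' → l'.length ≤ l.length) (h2 : 2 ≤ l.length)
    (hdeg : ∀ u v, u ≠ v → ¬ G.Adj u v → l.length ≤ G.degree u + G.degree v) :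
    ∃ l', l'.Perm l ∧ G.IsPathList l' ∧ G.IsClosedList l' := by
  classical
  have hhead : ∀ m, G.IsPathList m → m.length = l.length → ∀ u ∈ m.head?, ∀ w, G.Adj u w →
      w ∈ m := by
    intro m hm hml u hu w huw
    by_contra hw
    have := hmax (w :: m) ⟨hm.1.cons fun y hy => by
      rw [Option.mem_unique hy hu]; exact huw.symm, List.nodup_cons.2 ⟨hw, hm.2⟩⟩
    simp at this
    omega
  have h0 : 0 < l.length := by omega
  set u := l[0] with hu
  set v := l[l.length - 1] with hv
  have hhd : l.head? = some u := by rw [List.head?_eq_getElem?]; simp [hu, h0]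
  have hlt : l.getLast? = some v := by rw [List.getLast?_eq_getElem?]; simp [hv, h0]
  have huN : ∀ w, G.Adj u w → w ∈ l := hhead l hl rfl u hhd
  have hvN : ∀ w, G.Adj v w → w ∈ l := fun w hw =>
    List.mem_reverse.1 (hhead l.reverse hl.reverse (by simp) v (by simp [hlt]) w hw)
  by_cases huv : G.Adj u v
  · refine ⟨l, .refl l, hl, fun x hx y hy => ?_⟩
    rw [Option.mem_unique hx hlt, Option.mem_unique hy hhd]
    exact huv.symm
  have hne : u ≠ v := by
    intro h
    have := (List.Nodup.getElem_inj_iff hl.2).1 h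
    omega
  have hd := hdeg u v hne huv
  let A := (Finset.univ : Finset (Fin (l.length - 1))).filter fun i => G.Adj u l[i.1 + 1]
  let B := (Finset.univ : Finset (Fin (l.length - 1))).filter fun i => G.Adj v l[i.1]
  have hA : G.degree u ≤ A.card := by
    rw [← G.card_neighborFinset_eq_degree]
    refine (Finset.card_le_card (t := A.image fun i => l[i.1 + 1]) ?_).trans
      Finset.card_image_le
    intro w hw
    rw [mem_neighborFinset] at hw
    obtain ⟨i, hi, rfl⟩ := List.getElem_of_mem (huN w hw)
    obtain _ | i := i
    · exact (G.irrefl hw).elim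
    · exact Finset.mem_image.2 ⟨⟨i, by omega⟩, by simpa [A] using hw, rfl⟩
  have hB : G.degree v ≤ B.card := by
    rw [← G.card_neighborFinset_eq_degree]
    refine (Finset.card_le_card (t := B.image fun i => l[i.1]) ?_).trans
      Finset.card_image_le
    intro w hw
    rw [mem_neighborFinset] at hw
    obtain ⟨i, hi, rfl⟩ := List.getElem_of_mem (hvN w hw)
    have : i ≠ l.length - 1 := by
      rintro rfl
      exact G.irrefl hw
    exact Finset.mem_image.2 ⟨⟨i, by omega⟩, by simpa [B] using hw, rfl⟩
  obtain ⟨i, hi⟩ : (A ∩ B).Nonempty := by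
    rw [← Finset.card_pos]
    have h1 := Finset.card_union_add_card_inter A B
    have h3 := Finset.card_le_univ (A ∪ B)
    rw [Fintype.card_fin] at h3
    omega
  have hiA : G.Adj u l[i.1 + 1] := by
    have := (Finset.mem_inter.1 hi).1
    simpa [A] using this
  have hiB : G.Adj v l[i.1] := by
    have := (Finset.mem_inter.1 hi).2
    simpa [B] using this
  have hil := i.2
  have hperm : (l.take (i.1 + 1) ++ (l.drop (i.1 + 1)).reverse).Perm l := by
    conv_rhs => rw [← List.take_append_drop (i.1 + 1) l]
    exact (List.reverse_perm _).append_left _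
  refine ⟨_, hperm, ⟨?_, hperm.nodup_iff.2 hl.2⟩, ?_⟩
  · rw [List.isChain_append]
    refine ⟨hl.1.take _, (IsPathList.reverse ⟨hl.1.drop _, hl.2.drop⟩).1, ?_⟩
    intro x hx y hy
    have hxe : x = l[i.1] := by
      rw [List.getLast?_take] at hx
      simp at hx
      grind
    have hye : y = v := by
      rw [List.head?_reverse, List.getLast?_drop] at hy
      grind
    rw [hxe, hye]
    exact hiB.symm
  · intro x hx y hy
    have hxe : x = l[i.1 + 1] := by
      rw [List.getLast?_append, List.getLast?_reverse, List.head?_drop] at hx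
      grind
    have hye : y = u := by
      rw [List.head?_append, List.head?_take] at hy
      grind
    rw [hxe, hye]
    exact hiA.symm

theorem IsPathList.exists_isAcyclic_le {G : SimpleGraph V} :
    ∀ {l : List V}, G.IsPathList l →
      ∃ F ≤ G, F.IsAcyclic ∧ (∀ x y, F.Adj x y → x ∈ l) ∧ l.IsChain F.Adj
  | [], _ => ⟨⊥, bot_le, isAcyclic_bot, by simp, by simp⟩
  | [a], _ => ⟨⊥, bot_le, isAcyclic_bot, by simp, by simp⟩
  | a :: b :: l, h => by
    obtain ⟨hch, hnd⟩ := h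
    rw [List.isChain_cons_cons] at hch
    rw [List.nodup_cons] at hnd
    obtain ⟨F, hFG, hF, hsupp, hFch⟩ := exists_isAcyclic_le (l := b :: l) ⟨hch.2, hnd.2⟩
    have hab : a ≠ b := hch.1.ne
    have hnr : ¬ F.Reachable a b := by
      rintro ⟨p⟩
      cases p with
      | nil => exact hab rfl
      | cons hadj q => exact hnd.1 (hsupp _ _ hadj)
    refine ⟨F ⊔ edge a b, sup_le hFG ?_, hF.sup_edge_of_not_reachable hnr, ?_, ?_⟩
    · rw [edge_le_iff]; exact Or.inr hch.1
    · intro x y hxy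
      rw [sup_adj, edge_adj] at hxy
      rcases hxy with hxy | ⟨⟨rfl, rfl⟩ | ⟨rfl, rfl⟩, -⟩
      · exact List.mem_cons_of_mem _ (hsupp _ _ hxy)
      · simp
      · simp
    · refine List.IsChain.cons_cons ?_ (hFch.imp fun x y hxy => Or.inl hxy)
      rw [sup_adj, edge_adj]
      exact Or.inr ⟨Or.inl ⟨rfl, rfl⟩, hab⟩

/-- A path extends to a spanning tree whose leaves are ends of the path or lie off the path. -/
theorem IsPathList.exists_spanning_tree [Fintype V] {G : SimpleGraph V} (hG : G.Connected)
    {l : List V} (hl : G.IsPathList l) :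
    ∃ H : G.Subgraph, H.IsSpanning ∧ H.coe.IsTree ∧
      endVertexCount H + l.length ≤ Fintype.card V + 2 := by
  classical
  obtain ⟨F, hFG, hF, -, hFch⟩ := hl.exists_isAcyclic_le
  obtain ⟨T, hFT, hTG, hT⟩ := hG.exists_isTree_le_of_le_of_isAcyclic hFG hF
  have hTch : l.IsChain T.Adj := hFch.imp fun x y hxy => hFT hxy
  refine ⟨toSubgraph T hTG, toSubgraph.isSpanning T hTG, ?_, ?_⟩
  · have e := (toSubgraph T hTG).spanningCoeEquivCoeOfSpanning (toSubgraph.isSpanning T hTG)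
    exact e.isTree_iff.1 hT
  · have hsub : {v : V | v ∈ (toSubgraph T hTG).verts ∧
        ((toSubgraph T hTG).neighborSet v).ncard = 1} ⊆
        ((l.head?.toFinset ∪ l.getLast?.toFinset ∪ l.toFinsetᶜ : Finset V) : Set V) := by
      rintro x ⟨-, hx⟩
      by_contra hxn
      simp only [Finset.coe_union, Set.mem_union, Finset.mem_coe, Option.mem_toFinset,
        Finset.mem_compl, List.mem_toFinset, not_or, not_not] at hxn
      obtain ⟨⟨hx1, hx2⟩, hx3⟩ := hxn
      obtain ⟨s, t, rfl⟩ := List.append_of_mem hx3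
      rcases List.eq_nil_or_concat' s with rfl | ⟨s, a, rfl⟩
      · simp at hx1
      rcases t with _ | ⟨b, t⟩
      · simp at hx2
      have hab : a ≠ b := by
        have := hl.2
        grind
      have hax : T.Adj x a := by
        have := List.isChain_append.1 hTch
        exact (this.2.2 a (by simp) x (by simp)).symm
      have hbx : T.Adj x b := by
        have := (List.isChain_append.1 hTch).2.1
        exact (List.isChain_cons_cons.1 this).1
      obtain ⟨c, hc⟩ := Set.ncard_eq_one.1 hx
      have h1 : a ∈ (toSubgraph T hTG).neighborSet x := hax
      have h2 : b ∈ (toSubgraph T hTG).neighborSet x := hbx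
      rw [hc] at h1 h2
      exact hab (h1.trans h2.symm)
    have h1 := Set.ncard_le_ncard hsub (Finset.finite_toSet _)
    rw [Set.ncard_coe_finset] at h1
    have h2 := Finset.card_union_le (l.head?.toFinset ∪ l.getLast?.toFinset) l.toFinsetᶜ
    have h3 := Finset.card_union_le l.head?.toFinset l.getLast?.toFinset
    have h4 : ∀ o : Option V, o.toFinset.card ≤ 1 := by
      rintro (_ | _) <;> simp
    have h5 := h4 l.head?
    have h6 := h4 l.getLast?
    have h7 := Finset.card_add_card_compl l.toFinset
    rw [List.toFinset_card_of_nodup hl.2] at h7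
    unfold endVertexCount
    omega

theorem IsPathList.exists_isCycleSubgraph {G : SimpleGraph V} {l : List V}
    (hl : G.IsPathList l) (hc : G.IsClosedList l) (h3 : 3 ≤ l.length) (hall : ∀ v, v ∈ l) :
    ∃ H : G.Subgraph, H.IsSpanning ∧ IsCycleSubgraph H := by
  have hne : l ≠ [] := by rintro rfl; simp at h3
  let p := Walk.ofSupport l hne hl.1
  have hps : p.support = l := Walk.support_ofSupport hne hl.1
  have hpl : p.length = l.length - 1 := Walk.length_ofSupport hne hl.1
  have hp : p.IsPath := by rw [Walk.isPath_def, hps]; exact hl.2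
  have hadj : G.Adj (l.getLast hne) (l.head hne) :=
    hc _ (List.getLast_mem_getLast? hne) _ (List.head_mem_head? hne)
  have hcyc : (Walk.cons hadj p).IsCycle := by
    rw [Walk.isCycle_iff_isPath_tail_and_le_length, Walk.length_cons]
    exact ⟨by simpa using hp, by omega⟩
  refine ⟨(Walk.cons hadj p).toSubgraph, fun v => ?_, ?_, Or.inr fun v hv => ?_⟩
  · rw [Walk.mem_verts_toSubgraph, Walk.support_cons, hps]
    exact List.mem_cons_of_mem _ (hall v)
  · exact Walk.toSubgraph_connected _
  · exact hcyc.ncard_neighborSet_toSubgraph_eq_two ((Walk.mem_verts_toSubgraph _).1 hv)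

end SimpleGraph

theorem le_degree_add_degree [Fintype V] (G : SimpleGraph V) [DecidableRel G.Adj] {n k : ℕ}
    (h : (n : ℕ∞) + 1 ≤ minDegreeSum G 2 + (k : ℕ∞)) {u v : V} (huv : u ≠ v)
    (hadj : ¬ G.Adj u v) : n + 1 ≤ G.degree u + G.degree v + k := by
  classical
  have hle : minDegreeSum G 2 ≤ ((G.degree u + G.degree v : ℕ) : ℕ∞) := by
    refine (iInf₂_le ({u, v} : Finset V) ⟨Finset.card_pair huv, ?_⟩).trans ?_
    · rw [Finset.sum_pair huv]; simp
    · intro x hx y hy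
      have hvu : ¬ G.Adj v u := fun h => hadj h.symm
      simp only [Finset.coe_insert, Finset.coe_singleton, Set.mem_insert_iff,
        Set.mem_singleton_iff] at hx hy
      rcases hx with rfl | rfl <;> rcases hy with rfl | rfl <;> simp [*]
  have := h.trans (add_le_add_left hle (k : ℕ∞))
  exact_mod_cast this

/-- **Corollary 7.** If `G` is connected of order `n` and `σ_2 ≥ n - k + 1` for
some positive integer `k`, then `G` has a spanning `k`-ended tree. -/
theorem corollary7 [Fintype V] (G : SimpleGraph V) [DecidableRel G.Adj]
    (hG : G.Connected) (k : ℕ) (hk : 1 ≤ k)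
    (h : (Fintype.card V : ℕ∞) + 1 ≤ minDegreeSum G 2 + (k : ℕ∞)) :
    ∃ H : G.Subgraph, H.IsSpanning ∧ IsKEndedTree G k H := by
  classical
  rcases le_or_gt (Fintype.card V) 2 with hn | hn
  · refine ⟨⊤, fun v => trivial, Or.inr ⟨hk, ?_, Or.inl ?_⟩⟩
    · exact Subgraph.connected_iff'.2 (Subgraph.topIso.connected_iff.2 hG)
    · simpa [Set.ncard_univ] using hn
  obtain ⟨l, hl, hmax⟩ := G.exists_longest_isPathList
  have h2 : 2 ≤ l.length := by
    have : Nontrivial V := Fintype.one_lt_card_iff_nontrivial.1 (by omega)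
    obtain ⟨v⟩ := hG.nonempty
    obtain ⟨w, hw⟩ := hG.preconnected.exists_adj_of_nontrivial v
    exact hmax [v, w] ⟨by simpa using hw, by simpa using hw.ne⟩
  have hlen : l.length ≤ Fintype.card V := hl.2.length_le_card
  have hclosed : l.length + k ≤ Fintype.card V + 1 →
      ∃ l', l'.Perm l ∧ G.IsPathList l' ∧ G.IsClosedList l' := fun hle =>
    hl.exists_closed_perm hmax h2 fun u v huv hadj => by
      have := le_degree_add_degree G h huv hadj
      omega
  have hfull : l.length + k ≤ Fintype.card V + 1 → ∀ v, v ∈ l := by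
    intro hle w
    obtain ⟨l', hperm, hl', hc⟩ := hclosed hle
    by_contra hw
    obtain ⟨m, hm, hlt⟩ := hl'.exists_length_lt hG hc
      (by rintro rfl; simp [← hperm.length_eq] at h2) (w := w) (by rwa [hperm.mem_iff])
    have := hmax m hm
    rw [hperm.length_eq] at hlt
    omega
  have hcard : l.length + k ≤ Fintype.card V + 1 → Fintype.card V ≤ l.length := by
    intro hle
    rw [← List.toFinset_card_of_nodup hl.2]
    exact Finset.card_le_card fun v _ => List.mem_toFinset.2 (hfull hle v)
  rcases Nat.lt_or_ge k 2 with hk2 | hk2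
  · have hle : l.length + k ≤ Fintype.card V + 1 := by omega
    obtain ⟨l', hperm, hl', hc⟩ := hclosed hle
    have := hcard hle
    obtain ⟨H, hspan, hH⟩ := hl'.exists_isCycleSubgraph hc
      (by rw [hperm.length_eq]; omega) fun v => hperm.mem_iff.2 (hfull hle v)
    exact ⟨H, hspan, Or.inr ⟨hk, hH⟩⟩
  · obtain ⟨H, hspan, hT, hcount⟩ := hl.exists_spanning_tree hG
    exact ⟨H, hspan, Or.inl ⟨hT, by omega⟩⟩
end
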